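/- arXiv:1703.10347 — 2 statements merged into one kernel-verified Lean document; each statement's English description precedes it below -/
import Mathlib

section
/- Let k ≥ 3 be an integer. For every ε > 0 there exists a constant A > 0 such that for all real X ≥ 2, the series ∑_{n≥1} P_k(n) n^{k/2−1} e^{−n/X} converges absolutely and |∑_{n≥1} P_k(n) n^{k/2−1} e^{−n/X} − (π^{k/2} Γ(k−1)/(2 Γ(k/2))) X^{k−1} − (π^{k/2} Γ(k−2)/(12 Γ(k/2 − 1))) X^{k−2}| ≤ A X^{k−3+ε}. -/
open scoped Real

/-- `rk k m` = number of ways to write `m` as a sum of `k` integer squares. -/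
noncomputable def rk (k m : ℕ) : ℕ :=
  Nat.card {v : Fin k → ℤ // (∑ i, (v i) ^ 2) = (m : ℤ)}

/-- `Sk k t` = number of lattice points of `ℤ^k` in the closed ball of radius `√t`. -/
noncomputable def Sk (k : ℕ) (t : ℝ) : ℕ :=
  Nat.card {v : Fin k → ℤ // (∑ i, ((v i : ℝ)) ^ 2) ≤ t}

/-- `Vk k` = volume of the unit ball in `ℝ^k`. -/
noncomputable def Vk (k : ℕ) : ℝ :=
  Real.pi ^ ((k : ℝ) / 2) / Real.Gamma ((k : ℝ) / 2 + 1)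

/-- `Pk k t` = lattice point discrepancy of the `k`-dimensional ball of radius `√t`. -/
noncomputable def Pk (k : ℕ) (t : ℝ) : ℝ :=
  (Sk k t : ℝ) - Vk k * t ^ ((k : ℝ) / 2)

/-- Value of the (analytically continued) Riemann zeta function at a real point. -/
noncomputable def rzeta (x : ℝ) : ℝ := (riemannZeta (x : ℂ)).re

/-- The Riemann zeta function with its 2-factor removed. -/
noncomputable def rzeta2 (x : ℝ) : ℝ := (1 - (2 : ℝ) ^ (-x)) * rzeta x

/-- The constant `C_k` for `k ≥ 4`. -/
noncomputable def Ck (k : ℕ) : ℝ :=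
  ((k : ℝ) ^ 2 / 24) * (Vk k) ^ 2 +
    Real.pi ^ (k : ℝ) * rzeta ((k : ℝ) - 2) * (1 + (2 : ℝ) ^ ((3 : ℝ) - (k : ℝ))) /
      (12 * (Real.Gamma ((k : ℝ) / 2)) ^ 2 * rzeta2 (k : ℝ))

/-!
The functional equation of the theta function `θ(z) = ∑ e^{-m² z}` (sum over `m ∈ ℤ`) shows that the
generating function `∑ S_k(n) e^{-nz} = θ(z)^k / (1 - e^{-z})` equals
`(π / z)^{k/2} (1 / z + 1 / 2 + z / 12) + O(|z|^{3 - k/2})` as `z → 0` in a sector. Cauchy's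
estimate allows this to be differentiated termwise, which inserts a weight `n^N` into the sum. To
reach the real power `n^β`, integrate the `N`-th derivative for some large `N` against the kernel
of the Weyl fractional integral, using `Γ(N - β) n^β = ∫_0^∞ u^{N - β - 1} n^N e^{-nu} du`; each
`z^{-s}` then turns into `Γ(s + β) / Γ(s) · y^{-(s + β)}`. The volume term of `P_k` is handled by
the same expansion in dimension `0`, as `S_0(n) = 1`.
-/

open Filter Topology MeasureTheory Set

lemma integrable_and_integral_eq_of_lintegral_ofReal {α : Type*} [MeasurableSpace α]
    {μ : Measure α} {f : α → ℝ} {I : ℝ} (hf : AEStronglyMeasurable f μ) (hf0 : 0 ≤ᵐ[μ] f)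
    (hI : 0 ≤ I) (h : ∫⁻ x, ENNReal.ofReal (f x) ∂μ = ENNReal.ofReal I) :
    Integrable f μ ∧ ∫ x, f x ∂μ = I := by
  refine ⟨(lintegral_ofReal_ne_top_iff_integrable hf hf0).1 (h ▸ ENNReal.ofReal_ne_top), ?_⟩
  rw [integral_eq_lintegral_of_nonneg_ae hf0 hf, h, ENNReal.toReal_ofReal hI]

/-- The measure `u ^ (b - 1) / Γ(b) du` on `(0, ∞)`, convolution kernel of the Weyl fractional
integral `f ↦ ∫ f (y + u) du` of order `b`; it multiplies `exp (-n y)` by `n ^ (-b)`. -/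
noncomputable def weylMeasure (b : ℝ) : Measure ℝ :=
  (volume.restrict (Ioi 0)).withDensity fun u => ENNReal.ofReal (u ^ (b - 1) / Real.Gamma b)

lemma weylMeasure_absolutelyContinuous (b : ℝ) : weylMeasure b ≪ volume.restrict (Ioi 0) :=
  withDensity_absolutelyContinuous _ _

lemma ae_pos_weylMeasure (b : ℝ) : ∀ᵐ u ∂weylMeasure b, 0 < u :=
  (weylMeasure_absolutelyContinuous b).ae_le (ae_restrict_mem measurableSet_Ioi)

section WeylMeasure

variable {b p q x y : ℝ}

instance : SFinite (weylMeasure b) := by unfold weylMeasure; infer_instance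

lemma lintegral_rpow_mul_exp_weylMeasure (hb : 0 < b) (hbq : 0 < b + q) (hx : 0 < x) :
    ∫⁻ u, ENNReal.ofReal (u ^ q * Real.exp (-(x * u))) ∂weylMeasure b =
      ENNReal.ofReal (Real.Gamma (b + q) / Real.Gamma b * x ^ (-(b + q))) := by
  have hcombine : ∀ u ∈ Ioi (0 : ℝ), ENNReal.ofReal (u ^ (b - 1) / Real.Gamma b) *
      ENNReal.ofReal (u ^ q * Real.exp (-(x * u))) =
      ENNReal.ofReal ((Real.Gamma b)⁻¹ * (u ^ (b + q - 1) * Real.exp (-(x * u)))) := by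
    intro u (hu : 0 < u)
    rw [← ENNReal.ofReal_mul (by positivity), show b + q - 1 = (b - 1) + q by ring,
      Real.rpow_add hu]
    ring_nf
  rw [weylMeasure, lintegral_withDensity_eq_lintegral_mul₀ (by fun_prop) (by fun_prop)]
  simp only [Pi.mul_apply]
  rw [setLIntegral_congr_fun measurableSet_Ioi hcombine, ← ofReal_integral_eq_lintegral_ofReal,
    integral_const_mul, Real.integral_rpow_mul_exp_neg_mul_Ioi hbq hx, one_div,
    Real.inv_rpow hx.le, ← Real.rpow_neg hx.le]
  · ring_nf
  · have h := integrableOn_rpow_mul_exp_neg_mul_rpow (s := b + q - 1) (p := 1) (b := x)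
      (by linarith) one_pos hx
    simp only [Real.rpow_one, neg_mul] at h
    exact h.const_mul _
  · filter_upwards [ae_restrict_mem measurableSet_Ioi] with u (hu : 0 < u)
    simp only [Pi.zero_apply]
    positivity

lemma integrable_rpow_mul_exp_weylMeasure (hb : 0 < b) (hbq : 0 < b + q) (hx : 0 < x) :
    Integrable (fun u => u ^ q * Real.exp (-(x * u))) (weylMeasure b) := by
  refine (integrable_and_integral_eq_of_lintegral_ofReal
    (Measurable.aestronglyMeasurable (by fun_prop)) ?_ (by positivity)
    (lintegral_rpow_mul_exp_weylMeasure hb hbq hx)).1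
  filter_upwards [ae_pos_weylMeasure b] with u hu
  simp only [Pi.zero_apply]
  positivity

lemma lintegral_exp_weylMeasure (hb : 0 < b) (hx : 0 < x) :
    ∫⁻ u, ENNReal.ofReal (Real.exp (-(x * u))) ∂weylMeasure b = ENNReal.ofReal (x ^ (-b)) := by
  simpa [(Real.Gamma_pos_of_pos hb).ne'] using
    lintegral_rpow_mul_exp_weylMeasure (q := 0) hb (by simpa using hb) hx

lemma integrable_exp_weylMeasure (hb : 0 < b) (hx : 0 < x) :
    Integrable (fun u => Real.exp (-(x * u))) (weylMeasure b) := by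
  simpa using integrable_rpow_mul_exp_weylMeasure (q := 0) hb (by simpa using hb) hx

lemma integral_exp_weylMeasure (hb : 0 < b) (hx : 0 < x) :
    ∫ u, Real.exp (-(x * u)) ∂weylMeasure b = x ^ (-b) :=
  (integrable_and_integral_eq_of_lintegral_ofReal
    (Measurable.aestronglyMeasurable (by fun_prop)) (ae_of_all _ fun _ => Real.exp_nonneg _)
    (by positivity) (lintegral_exp_weylMeasure hb hx)).2

lemma lintegral_add_rpow_weylMeasure (hb : 0 < b) (hp : 0 < p) (hy : 0 < y) :
    ∫⁻ u, ENNReal.ofReal ((y + u) ^ (-(b + p))) ∂weylMeasure b =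
      ENNReal.ofReal (Real.Gamma p / Real.Gamma (b + p) * y ^ (-p)) := by
  have hbp : 0 < b + p := by positivity
  calc ∫⁻ u, ENNReal.ofReal ((y + u) ^ (-(b + p))) ∂weylMeasure b
      = ∫⁻ u, ∫⁻ t, ENNReal.ofReal (Real.exp (-((y + u) * t))) ∂weylMeasure (b + p)
          ∂weylMeasure b := by
        refine lintegral_congr_ae ?_
        filter_upwards [ae_pos_weylMeasure b] with u hu
        rw [lintegral_exp_weylMeasure hbp (by positivity)]
    _ = ∫⁻ t, ∫⁻ u, ENNReal.ofReal (Real.exp (-((y + u) * t))) ∂weylMeasure b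
          ∂weylMeasure (b + p) := lintegral_lintegral_swap (by fun_prop)
    _ = ∫⁻ t, ENNReal.ofReal (t ^ (-b) * Real.exp (-(y * t))) ∂weylMeasure (b + p) := by
        refine lintegral_congr_ae ?_
        filter_upwards [ae_pos_weylMeasure (b + p)] with t ht
        have hsplit : ∀ u, ENNReal.ofReal (Real.exp (-((y + u) * t))) =
            ENNReal.ofReal (Real.exp (-(y * t))) * ENNReal.ofReal (Real.exp (-(t * u))) := by
          intro u
          rw [← ENNReal.ofReal_mul (Real.exp_nonneg _), ← Real.exp_add]
          ring_nf
        simp only [hsplit]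
        rw [lintegral_const_mul _ (by fun_prop), lintegral_exp_weylMeasure hb ht,
          ← ENNReal.ofReal_mul (Real.exp_nonneg _), mul_comm]
    _ = _ := by
        rw [lintegral_rpow_mul_exp_weylMeasure hbp (by linarith) hy]
        ring_nf

lemma integrable_and_integral_add_rpow_weylMeasure (hb : 0 < b) (hp : 0 < p) (hy : 0 < y) :
    Integrable (fun u => (y + u) ^ (-(b + p))) (weylMeasure b) ∧
      ∫ u, (y + u) ^ (-(b + p)) ∂weylMeasure b =
        Real.Gamma p / Real.Gamma (b + p) * y ^ (-p) := by
  refine integrable_and_integral_eq_of_lintegral_ofReal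
    (Measurable.aestronglyMeasurable (by fun_prop)) ?_ (by positivity)
    (lintegral_add_rpow_weylMeasure hb hp hy)
  filter_upwards [ae_pos_weylMeasure b] with u hu
  simp only [Pi.zero_apply]
  positivity

end WeylMeasure

/-- Convergence of the exponential series `∑ cₙ e^{-nz}` on the half-plane `0 < Re z`; it is enough
to test it on the positive real axis. -/
def ExpSummable (c : ℕ → ℂ) : Prop :=
  ∀ x : ℝ, 0 < x → Summable fun n : ℕ => c n * Complex.exp (-x * n)

/-- The exponential series `∑ cₙ e^{-nz}`. -/
noncomputable def expSum (c : ℕ → ℂ) (z : ℂ) : ℂ := ∑' n : ℕ, c n * Complex.exp (-z * n)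

section ExpSum

variable {c : ℕ → ℂ} {b x y u : ℝ} {z : ℂ}

lemma norm_exp_neg_mul_natCast (z : ℂ) (n : ℕ) :
    ‖Complex.exp (-z * n)‖ = Real.exp (-z.re * n) := by
  simp [Complex.norm_exp]

lemma ExpSummable.summable_norm_mul_pow (hc : ExpSummable c) (j : ℕ) (hx : 0 < x) :
    Summable fun n : ℕ => ‖c n * (n : ℂ) ^ j‖ * Real.exp (-x * n) := by
  refine Summable.of_nonneg_of_le (fun n => by positivity) (fun n => ?_)
    ((hc (x / 2) (half_pos hx)).norm.mul_left (j.factorial / (x / 2) ^ j : ℝ))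
  have hpow : (n : ℝ) ^ j ≤ j.factorial / (x / 2) ^ j * Real.exp (x / 2 * n) := by
    have h := Real.pow_div_factorial_le_exp (x / 2 * n) (by positivity) j
    rw [div_le_iff₀ (by positivity), mul_pow] at h
    rw [div_mul_eq_mul_div, le_div_iff₀ (by positivity)]
    linarith
  rw [norm_mul, norm_mul, norm_exp_neg_mul_natCast, norm_pow, Complex.norm_natCast,
    Complex.ofReal_re]
  calc ‖c n‖ * (n : ℝ) ^ j * Real.exp (-x * n)
      ≤ ‖c n‖ * (j.factorial / (x / 2) ^ j * Real.exp (x / 2 * n)) * Real.exp (-x * n) := by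
        gcongr
    _ = j.factorial / (x / 2) ^ j *
          (‖c n‖ * (Real.exp (x / 2 * n) * Real.exp (-x * n))) := by ring
    _ = j.factorial / (x / 2) ^ j * (‖c n‖ * Real.exp (-(x / 2) * n)) := by
        rw [← Real.exp_add]
        ring_nf

lemma ExpSummable.summable_norm (hc : ExpSummable c) (hx : 0 < x) :
    Summable fun n : ℕ => ‖c n‖ * Real.exp (-x * n) := by
  simpa using hc.summable_norm_mul_pow 0 hx

lemma ExpSummable.mul_pow (hc : ExpSummable c) (j : ℕ) :
    ExpSummable fun n => c n * (n : ℂ) ^ j := fun x hx => by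
  refine Summable.of_norm ((hc.summable_norm_mul_pow j hx).congr fun n => ?_)
  rw [norm_mul _ (Complex.exp _), norm_exp_neg_mul_natCast, Complex.ofReal_re]

lemma hasDerivAt_expSum (hc : ExpSummable c) (hz : 0 < z.re) :
    HasDerivAt (expSum c) (-expSum (fun n => c n * n) z) z := by
  have hopen : IsOpen {w : ℂ | z.re / 2 < w.re} := isOpen_lt continuous_const Complex.continuous_re
  have hmem : z ∈ {w : ℂ | z.re / 2 < w.re} := half_lt_self hz
  have hterm : ∀ (n : ℕ) (w : ℂ), HasDerivAt (fun w : ℂ => c n * Complex.exp (-w * n))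
      (-(c n * n * Complex.exp (-w * n))) w := fun n w => by
    refine ((((hasDerivAt_id w).neg.mul_const (n : ℂ)).cexp).const_mul (c n)).congr_deriv ?_
    simp only [id, Pi.neg_apply]
    ring
  have hdiff : ∀ n : ℕ, DifferentiableOn ℂ (fun w : ℂ => c n * Complex.exp (-w * n))
      {w : ℂ | z.re / 2 < w.re} :=
    fun n w _ => (hterm n w).differentiableAt.differentiableWithinAt
  have hle : ∀ (n : ℕ) (w : ℂ), w ∈ {w : ℂ | z.re / 2 < w.re} →
      ‖c n * Complex.exp (-w * n)‖ ≤ ‖c n‖ * Real.exp (-(z.re / 2) * n) := by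
    intro n w (hw : z.re / 2 < w.re)
    rw [norm_mul, norm_exp_neg_mul_natCast]
    gcongr
  have hbound := hc.summable_norm (half_pos hz)
  have hderiv := Complex.hasSum_deriv_of_summable_norm hbound hdiff hopen hle hmem
  have hdiffAt := (Complex.differentiableOn_tsum_of_summable_norm hbound hdiff hopen hle z
    hmem).differentiableAt (hopen.mem_nhds hmem)
  refine hdiffAt.hasDerivAt.congr_deriv ?_
  rw [← hderiv.tsum_eq, expSum, ← tsum_neg]
  exact tsum_congr fun n => (hterm n z).deriv

lemma norm_expSum_add_le (hc : ExpSummable c) (h0 : c 0 = 0) (hx : 0 < x) (hu : 0 ≤ u) :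
    ‖expSum c ((x + u : ℝ) : ℂ)‖ ≤ (∑' n : ℕ, ‖c n‖ * Real.exp (-x * n)) * Real.exp (-u) := by
  rw [← tsum_mul_right]
  refine tsum_of_norm_bounded ((hc.summable_norm hx).mul_right _).hasSum fun n => ?_
  rcases Nat.eq_zero_or_pos n with rfl | hn
  · simp [h0]
  have hn1 : (1 : ℝ) ≤ n := by exact_mod_cast hn
  rw [norm_mul, norm_exp_neg_mul_natCast, Complex.ofReal_re, mul_assoc, ← Real.exp_add]
  gcongr
  nlinarith

lemma integrable_expSum_add_weylMeasure (hc : ExpSummable c) (h0 : c 0 = 0) (hb : 0 < b)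
    (hy : 0 < y) : Integrable (fun u : ℝ => expSum c ((y + u : ℝ) : ℂ)) (weylMeasure b) := by
  have hcont : ContinuousOn (fun u : ℝ => expSum c ((y + u : ℝ) : ℂ)) (Ioi 0) := by
    intro u (hu : 0 < u)
    have hre : 0 < ((y + u : ℝ) : ℂ).re := by simpa using add_pos hy hu
    exact ((hasDerivAt_expSum hc hre).continuousAt.comp
      (f := fun u : ℝ => ((y + u : ℝ) : ℂ)) (by fun_prop)).continuousWithinAt
  refine Integrable.mono' ((integrable_exp_weylMeasure hb one_pos).const_mul
    (∑' n : ℕ, ‖c n‖ * Real.exp (-y * n)))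
    ((hcont.aestronglyMeasurable measurableSet_Ioi).mono_ac
      (weylMeasure_absolutelyContinuous b)) ?_
  filter_upwards [ae_pos_weylMeasure b] with u hu
  simpa only [one_mul] using norm_expSum_add_le hc h0 hy hu.le

lemma exp_neg_add_mul_natCast (y u : ℝ) (n : ℕ) :
    Complex.exp (-((y + u : ℝ) : ℂ) * n) =
      Complex.exp (-y * n) * (Real.exp (-(n * u)) : ℝ) := by
  rw [Complex.ofReal_exp, ← Complex.exp_add]
  push_cast
  ring_nf

lemma hasSum_mul_rpow_neg_mul_exp (hc : ExpSummable c) (h0 : c 0 = 0) (hb : 0 < b) (hy : 0 < y) :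
    HasSum (fun n : ℕ => c n * ((n : ℝ) ^ (-b) : ℝ) * Complex.exp (-y * n))
      (∫ u, expSum c ((y + u : ℝ) : ℂ) ∂weylMeasure b) := by
  have hint : ∀ n : ℕ, Integrable (fun u : ℝ => c n * Complex.exp (-((y + u : ℝ) : ℂ) * n))
      (weylMeasure b) := fun n => by
    rcases Nat.eq_zero_or_pos n with rfl | hn
    · simp [h0]
    simp only [exp_neg_add_mul_natCast]
    exact ((integrable_exp_weylMeasure hb (Nat.cast_pos.2 hn)).ofReal.const_mul _).const_mul _
  have hval : ∀ n : ℕ, ∫ u : ℝ, c n * Complex.exp (-((y + u : ℝ) : ℂ) * n) ∂weylMeasure b =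
      c n * ((n : ℝ) ^ (-b) : ℝ) * Complex.exp (-y * n) := fun n => by
    rcases Nat.eq_zero_or_pos n with rfl | hn
    · simp [h0]
    simp only [exp_neg_add_mul_natCast]
    rw [integral_const_mul, integral_const_mul, integral_complex_ofReal,
      integral_exp_weylMeasure hb (Nat.cast_pos.2 hn)]
    ring
  have hnorm : ∀ n : ℕ, ∫ u : ℝ, ‖c n * Complex.exp (-((y + u : ℝ) : ℂ) * n)‖ ∂weylMeasure b ≤
      ‖c n‖ * Real.exp (-y * n) := fun n => by
    rcases Nat.eq_zero_or_pos n with rfl | hn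
    · simp [h0]
    simp only [exp_neg_add_mul_natCast, norm_mul, norm_exp_neg_mul_natCast, Complex.ofReal_re,
      Complex.norm_real, Real.norm_of_nonneg (Real.exp_nonneg _), ← mul_assoc]
    rw [integral_const_mul, integral_exp_weylMeasure hb (Nat.cast_pos.2 hn)]
    exact mul_le_of_le_one_right (by positivity)
      (Real.rpow_le_one_of_one_le_of_nonpos (by exact_mod_cast hn) (by linarith))
  have h := hasSum_integral_of_summable_integral_norm hint
    ((hc.summable_norm hy).of_nonneg_of_le
      (fun n => integral_nonneg fun _ => norm_nonneg _) hnorm)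
  simpa only [hval, expSum] using h

end ExpSum

section Cauchy

variable {G : ℕ → ℂ → ℂ}

lemma iteratedDeriv_eq_of_hasDerivAt_neg_succ
    (hG : ∀ j z, 0 < z.re → HasDerivAt (G j) (-G (j + 1) z) z) (j : ℕ) {z : ℂ} (hz : 0 < z.re) :
    iteratedDeriv j (G 0) z = (-1) ^ j * G j z := by
  induction j generalizing z with
  | zero => simp
  | succ j ih =>
    have hev : iteratedDeriv j (G 0) =ᶠ[𝓝 z] fun w => (-1) ^ j * G j w :=
      eventually_of_mem ((isOpen_lt continuous_const Complex.continuous_re).mem_nhds hz)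
        fun w hw => ih hw
    rw [iteratedDeriv_succ, hev.deriv_eq, ((hG j z hz).const_mul _).deriv]
    ring

lemma norm_le_of_hasDerivAt_neg_succ
    (hG : ∀ j z, 0 < z.re → HasDerivAt (G j) (-G (j + 1) z) z) {y r B : ℝ} (hr : 0 < r)
    (hry : r < y) (hB : ∀ z ∈ Metric.sphere (y : ℂ) r, ‖G 0 z‖ ≤ B) (N : ℕ) :
    ‖G N y‖ ≤ N.factorial * B / r ^ N := by
  have hderiv := iteratedDeriv_eq_of_hasDerivAt_neg_succ hG N (z := y) (hr.trans hry)
  have hnorm : ‖G N y‖ = ‖iteratedDeriv N (G 0) y‖ := by simp [hderiv]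
  rw [hnorm]
  refine Complex.norm_iteratedDeriv_le_of_forall_mem_sphere_norm_le N hr ?_ hB
  refine DifferentiableOn.diffContOnCl fun z hz => ?_
  rw [closure_ball _ hr.ne'] at hz
  have hre := (abs_le.1 ((Complex.abs_re_le_norm (z - y)).trans (mem_closedBall_iff_norm.1 hz))).1
  rw [Complex.sub_re, Complex.ofReal_re] at hre
  exact (hG 0 z (by linarith)).differentiableAt.differentiableWithinAt

end Cauchy

/-- Valid at the poles of `Γ` too: if `s = -m`, the left side vanishes because `m < N`, and so does
the right side because `Γ(-m) = 0` and `x / 0 = 0`. -/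
lemma ascPochhammer_eval_eq_Gamma_div (N : ℕ) {s : ℝ} (h : 0 < s + N) :
    (ascPochhammer ℝ N).eval s = Real.Gamma (s + N) / Real.Gamma s := by
  induction N generalizing s with
  | zero => simp [(Real.Gamma_pos_of_pos (by simpa using h)).ne']
  | succ N ih =>
    have hs : s + 1 + N = s + (N + 1 : ℕ) := by push_cast; ring
    have hrec := ih (s := s + 1) (hs ▸ h)
    rw [ascPochhammer_succ_left, Polynomial.eval_mul, Polynomial.eval_comp]
    simp only [Polynomial.eval_X, Polynomial.eval_add, Polynomial.eval_one]
    rw [hrec, hs]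
    rcases eq_or_ne s 0 with rfl | hs0
    · simp
    · rw [Real.Gamma_add_one hs0, ← mul_div_assoc, mul_div_mul_left _ _ hs0]

/-- `(-d/dz)ʲ z^{-s} = s (s+1) ⋯ (s+j-1) z^{-s-j}`, the building block of expansions at `z = 0`. -/
noncomputable def polarTerm (s : ℝ) (j : ℕ) (z : ℂ) : ℂ :=
  (((ascPochhammer ℝ j).eval s : ℝ) : ℂ) * z ^ ((-(s + j) : ℝ) : ℂ)

section PolarTerm

variable {s : ℝ} {j : ℕ}

lemma polarTerm_zero (s : ℝ) (z : ℂ) : polarTerm s 0 z = z ^ ((-s : ℝ) : ℂ) := by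
  simp [polarTerm]

lemma hasDerivAt_polarTerm (s : ℝ) (j : ℕ) {z : ℂ} (hz : 0 < z.re) :
    HasDerivAt (polarTerm s j) (-polarTerm s (j + 1) z) z := by
  have h := ((hasDerivAt_id z).cpow_const (c := ((-(s + j) : ℝ) : ℂ)) (Or.inl hz)).const_mul
    (((ascPochhammer ℝ j).eval s : ℝ) : ℂ)
  refine h.congr_deriv ?_
  rw [polarTerm, ascPochhammer_succ_eval,
    show ((-(s + (j + 1 : ℕ)) : ℝ) : ℂ) = ((-(s + j) : ℝ) : ℂ) - 1 by push_cast; ring]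
  push_cast
  simp only [id]
  ring

lemma polarTerm_ofReal (s : ℝ) (j : ℕ) {v : ℝ} (hv : 0 ≤ v) :
    polarTerm s j v = ((ascPochhammer ℝ j).eval s * v ^ (-(s + j)) : ℝ) := by
  rw [polarTerm, ← Complex.ofReal_cpow hv, ← Complex.ofReal_mul]

lemma exists_norm_polarTerm_le (hs : 0 < s + j) :
    ∃ C : ℝ, 0 ≤ C ∧ ∀ v : ℝ, 1 / 2 ≤ v → ‖polarTerm s j v‖ ≤ C * (1 + v) ^ (-(s + j)) := by
  refine ⟨|(ascPochhammer ℝ j).eval s| * (1 / 3) ^ (-(s + j)), by positivity, fun v hv => ?_⟩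
  rw [polarTerm_ofReal s j (by linarith), Complex.norm_real, Real.norm_eq_abs, abs_mul, mul_assoc,
    ← Real.mul_rpow (by norm_num) (by linarith), Real.abs_rpow_of_nonneg (by linarith),
    abs_of_nonneg (by linarith : 0 ≤ v)]
  gcongr ?_ * ?_
  exact Real.rpow_le_rpow_of_nonpos (by linarith) (by linarith) (by linarith)

lemma integrable_and_integral_polarTerm_add {b y : ℝ} (hb : 0 < b) (hy : 0 < y)
    (hs : b < s + j) :
    Integrable (fun u : ℝ => polarTerm s j ((y + u : ℝ) : ℂ)) (weylMeasure b) ∧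
      ∫ u, polarTerm s j ((y + u : ℝ) : ℂ) ∂weylMeasure b =
        (Real.Gamma (s + j - b) / Real.Gamma s * y ^ (-(s + j - b)) : ℝ) := by
  obtain ⟨hint, hval⟩ := integrable_and_integral_add_rpow_weylMeasure hb (sub_pos.2 hs) hy
  rw [add_sub_cancel] at hint hval
  have hae : (fun u : ℝ => polarTerm s j ((y + u : ℝ) : ℂ)) =ᵐ[weylMeasure b]
      fun u => (((ascPochhammer ℝ j).eval s * (y + u) ^ (-(s + j)) : ℝ) : ℂ) := by
    filter_upwards [ae_pos_weylMeasure b] with u hu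
    exact polarTerm_ofReal s j (by positivity)
  refine ⟨(integrable_congr hae).2 (hint.const_mul _).ofReal, ?_⟩
  have hG := (Real.Gamma_pos_of_pos (hb.trans hs)).ne'
  rw [integral_congr_ae hae, integral_complex_ofReal, integral_const_mul, hval,
    ascPochhammer_eval_eq_Gamma_div j (hb.trans hs)]
  field_simp

end PolarTerm

/-- The part near `0` of a sector in the right half-plane, where expansions at `z = 0` are
considered. It contains the circle of centre `v` and radius `v / 2` for `0 < v ≤ 1 / 2`. -/
def truncatedSector : Set ℂ := {z | 0 < z.re ∧ ‖z‖ ≤ 3 * z.re ∧ ‖z‖ ≤ 1}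

lemma bounds_of_mem_sphere {v : ℝ} (hv : 0 < v) {z : ℂ} (hz : z ∈ Metric.sphere (v : ℂ) (v / 2)) :
    v / 2 ≤ z.re ∧ ‖z‖ ≤ 3 / 2 * v := by
  rw [mem_sphere_iff_norm] at hz
  have hre := (abs_le.1 ((Complex.abs_re_le_norm (z - v)).trans hz.le)).1
  have hnorm := norm_le_norm_sub_add z (v : ℂ)
  rw [Complex.sub_re, Complex.ofReal_re] at hre
  rw [hz, Complex.norm_real, Real.norm_of_nonneg hv.le] at hnorm
  exact ⟨by linarith, by linarith⟩

lemma sphere_subset_truncatedSector {v : ℝ} (hv : 0 < v) (hv2 : v ≤ 1 / 2) :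
    Metric.sphere (v : ℂ) (v / 2) ⊆ truncatedSector := fun z hz => by
  obtain ⟨hre, hnorm⟩ := bounds_of_mem_sphere hv hz
  exact ⟨by linarith, by linarith, by linarith⟩

lemma rpow_le_two_rpow_abs_mul {v w : ℝ} (hv : 0 < v) (h₁ : v ≤ 2 * w) (h₂ : w ≤ 2 * v) (σ : ℝ) :
    w ^ σ ≤ 2 ^ |σ| * v ^ σ := by
  have hw : 0 < w := by linarith
  rcases le_total 0 σ with hσ | hσ
  · rw [abs_of_nonneg hσ, ← Real.mul_rpow two_pos.le hv.le]
    exact Real.rpow_le_rpow hw.le h₂ hσ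
  · rw [abs_of_nonpos hσ, Real.rpow_neg two_pos.le, ← Real.inv_rpow two_pos.le,
      ← Real.mul_rpow (by norm_num) hv.le]
    exact Real.rpow_le_rpow_of_nonpos (by positivity) (by linarith) hσ

section AbelianTheorem

variable {ι : Type*} [Fintype ι] {c : ℕ → ℂ} {a : ι → ℂ} {s : ι → ℝ} {σ : ℝ} {N : ℕ}

/-- The remainder `∑ cₙ e^{-nz} - ∑ᵢ aᵢ z^{-sᵢ}` of an expansion of an exponential series at
`z = 0`, to which `(-d/dz)ʲ` has been applied termwise. -/
noncomputable def expRemainder (c : ℕ → ℂ) (a : ι → ℂ) (s : ι → ℝ) (j : ℕ) (z : ℂ) : ℂ :=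
  expSum (fun n => c n * (n : ℂ) ^ j) z - ∑ i, a i * polarTerm (s i) j z

lemma hasDerivAt_expRemainder (hc : ExpSummable c) (j : ℕ) {z : ℂ} (hz : 0 < z.re) :
    HasDerivAt (expRemainder c a s j) (-expRemainder c a s (j + 1) z) z := by
  have hterms := HasDerivAt.fun_sum fun i (_ : i ∈ Finset.univ) =>
    (hasDerivAt_polarTerm (s i) j hz).const_mul (a i)
  refine ((hasDerivAt_expSum (hc.mul_pow j) hz).sub hterms).congr_deriv ?_
  simp only [expRemainder, mul_neg, Finset.sum_neg_distrib, pow_succ, mul_assoc]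
  ring

lemma exists_norm_expRemainder_le_of_le_half (hc : ExpSummable c) {B : ℝ} (hB0 : 0 ≤ B)
    (hB : ∀ z ∈ truncatedSector, ‖expRemainder c a s 0 z‖ ≤ B * ‖z‖ ^ (-σ)) (N : ℕ) :
    ∃ C : ℝ, 0 ≤ C ∧ ∀ v : ℝ, 0 < v → v ≤ 1 / 2 →
      ‖expRemainder c a s N v‖ ≤ C * (v ^ (-(σ + N)) * Real.exp (-v)) := by
  refine ⟨N.factorial * (B * 2 ^ |(-σ)|) * 2 ^ N * Real.exp (1 / 2), by positivity,
    fun v hv hv2 => ?_⟩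
  have hcircle : ∀ z ∈ Metric.sphere (v : ℂ) (v / 2),
      ‖expRemainder c a s 0 z‖ ≤ B * (2 ^ |(-σ)| * v ^ (-σ)) := fun z hz => by
    obtain ⟨hre, hnorm⟩ := bounds_of_mem_sphere hv hz
    have hlow := (le_abs_self z.re).trans (Complex.abs_re_le_norm z)
    refine (hB z (sphere_subset_truncatedSector hv hv2 hz)).trans ?_
    gcongr
    exact rpow_le_two_rpow_abs_mul hv (by linarith) (by linarith) _
  have hexp : 1 ≤ Real.exp (1 / 2) * Real.exp (-v) := by
    rw [← Real.exp_add]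
    exact Real.one_le_exp (by linarith)
  have hsplit : v ^ (-(σ + N)) = v ^ (-σ) / v ^ N := by
    rw [show -(σ + N) = -σ - N by ring, Real.rpow_sub_natCast hv.ne']
  calc ‖expRemainder c a s N v‖
      ≤ N.factorial * (B * (2 ^ |(-σ)| * v ^ (-σ))) / (v / 2) ^ N :=
        norm_le_of_hasDerivAt_neg_succ (fun j _ hz => hasDerivAt_expRemainder hc j hz)
          (half_pos hv) (half_lt_self hv) hcircle N
    _ = N.factorial * (B * 2 ^ |(-σ)|) * 2 ^ N * v ^ (-(σ + N)) * 1 := by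
        rw [hsplit, div_pow]
        field_simp
    _ ≤ N.factorial * (B * 2 ^ |(-σ)|) * 2 ^ N * v ^ (-(σ + N)) *
          (Real.exp (1 / 2) * Real.exp (-v)) := by gcongr
    _ = _ := by ring

lemma exists_norm_expRemainder_le_of_half_le (hc : ExpSummable c) (hN : N ≠ 0)
    (hs : ∀ i, 0 < s i + N) :
    ∃ C : ℝ, 0 ≤ C ∧ ∀ v : ℝ, 1 / 2 ≤ v →
      ‖expRemainder c a s N v‖ ≤ C * (Real.exp (-v) + ∑ i, (1 + v) ^ (-(s i + N))) := by
  choose K hK0 hK using fun i => exists_norm_polarTerm_le (hs i)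
  set T := ∑' n : ℕ, ‖c n * (n : ℂ) ^ N‖ * Real.exp (-(1 / 2) * n)
  have hT0 : 0 ≤ T := tsum_nonneg fun n => by positivity
  have hA0 : 0 ≤ ∑ i, ‖a i‖ * K i := Finset.sum_nonneg fun i _ => mul_nonneg (norm_nonneg _) (hK0 i)
  refine ⟨T * Real.exp (1 / 2) + ∑ i, ‖a i‖ * K i, by positivity, fun v hv => ?_⟩
  have hsum : ‖expSum (fun n => c n * (n : ℂ) ^ N) v‖ ≤ T * Real.exp (1 / 2) * Real.exp (-v) := by
    have h := norm_expSum_add_le (hc.mul_pow N) (by simp [hN]) one_half_pos (sub_nonneg.2 hv)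
    rwa [add_sub_cancel, neg_sub, sub_eq_add_neg, Real.exp_add, ← mul_assoc] at h
  have hpow0 : ∀ i, 0 ≤ (1 + v) ^ (-(s i + N)) := fun i => by positivity
  have hterms : ‖∑ i, a i * polarTerm (s i) N v‖ ≤
      (∑ i, ‖a i‖ * K i) * ∑ i, (1 + v) ^ (-(s i + N)) := by
    rw [Finset.sum_mul]
    refine norm_sum_le_of_le _ fun i hi => ?_
    rw [norm_mul, mul_assoc]
    gcongr
    refine (hK i v hv).trans (mul_le_mul_of_nonneg_left ?_ (hK0 i))
    exact Finset.single_le_sum (fun i _ => hpow0 i) hi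
  have hpows : 0 ≤ ∑ i, (1 + v) ^ (-(s i + N)) := Finset.sum_nonneg fun i _ => hpow0 i
  have hcross₁ := mul_nonneg hA0 (Real.exp_nonneg (-v))
  have hcross₂ := mul_nonneg (mul_nonneg hT0 (Real.exp_nonneg (1 / 2))) hpows
  exact (norm_sub_le _ _).trans (by linarith)

lemma exists_norm_expRemainder_le (hc : ExpSummable c) {B : ℝ} (hB0 : 0 ≤ B)
    (hB : ∀ z ∈ truncatedSector, ‖expRemainder c a s 0 z‖ ≤ B * ‖z‖ ^ (-σ)) (hN : N ≠ 0)
    (hs : ∀ i, 0 < s i + N) :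
    ∃ C : ℝ, 0 ≤ C ∧ ∀ v : ℝ, 0 < v → ‖expRemainder c a s N v‖ ≤
      C * (v ^ (-(σ + N)) * Real.exp (-v) + Real.exp (-v) + ∑ i, (1 + v) ^ (-(s i + N))) := by
  obtain ⟨C₁, hC₁0, hC₁⟩ := exists_norm_expRemainder_le_of_le_half hc hB0 hB N
  obtain ⟨C₂, hC₂0, hC₂⟩ := exists_norm_expRemainder_le_of_half_le hc hN hs
  refine ⟨C₁ + C₂, by positivity, fun v hv => ?_⟩
  have hpow : 0 ≤ v ^ (-(σ + N)) * Real.exp (-v) := by positivity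
  have hrest : 0 ≤ Real.exp (-v) + ∑ i, (1 + v) ^ (-(s i + N)) :=
    add_nonneg (Real.exp_nonneg _) (Finset.sum_nonneg fun i _ => by positivity)
  rw [add_assoc]
  rcases le_total v (1 / 2) with hv2 | hv2
  · exact (hC₁ v hv hv2).trans
      (mul_le_mul (by linarith) (le_add_of_nonneg_right hrest) hpow (by positivity))
  · exact (hC₂ v hv2).trans
      (mul_le_mul (by linarith) (le_add_of_nonneg_left hpow) hrest (by positivity))

/-- The factor `v ^ (-(σ + N))` of the pointwise bound, at `v = y + u`, is split into a power of
`y`, which is the final error term, and the largest power of `1 / u` integrable at `0`. -/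
lemma exists_integrable_norm_expRemainder_add_le (hc : ExpSummable c) {B : ℝ} (hB0 : 0 ≤ B)
    (hB : ∀ z ∈ truncatedSector, ‖expRemainder c a s 0 z‖ ≤ B * ‖z‖ ^ (-σ)) (hN : N ≠ 0)
    {b p : ℝ} (hb : 0 < b) (hs : ∀ i, b < s i + N) (hp : 0 ≤ p) (hpb : σ + N - b < p)
    (hpN : p ≤ σ + N) :
    ∃ g : ℝ → ℝ, Integrable g (weylMeasure b) ∧ ∀ y u : ℝ, 0 < y → y ≤ 1 → 0 < u →
      ‖expRemainder c a s N ((y + u : ℝ) : ℂ)‖ ≤ y ^ (-p) * g u := by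
  obtain ⟨C, hC0, hC⟩ := exists_norm_expRemainder_le hc hB0 hB hN fun i => hb.trans (hs i)
  refine ⟨fun u => C * (u ^ (-(σ + N - p)) * Real.exp (-u) + Real.exp (-u) +
    ∑ i, (1 + u) ^ (-(s i + N))), ?_, fun y u hy hy1 hu => (hC _ (by positivity)).trans ?_⟩
  · refine Integrable.const_mul (((?_ : Integrable _ _).add ?_).add
      (integrable_finsetSum _ fun i _ => ?_)) C
    · simpa only [one_mul] using
        integrable_rpow_mul_exp_weylMeasure (q := -(σ + N - p)) hb (by linarith) one_pos
    · simpa only [one_mul] using integrable_exp_weylMeasure hb one_pos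
    · have h := (integrable_and_integral_add_rpow_weylMeasure hb (sub_pos.2 (hs i)) one_pos).1
      rwa [add_sub_cancel] at h
  have hyp : 1 ≤ y ^ (-p) := Real.one_le_rpow_of_pos_of_le_one_of_nonpos hy hy1 (by linarith)
  have hpow : (y + u) ^ (-(σ + N)) ≤ y ^ (-p) * u ^ (-(σ + N - p)) := by
    rw [show -(σ + N) = -p + -(σ + N - p) by ring, Real.rpow_add (by positivity)]
    gcongr ?_ * ?_
    · exact Real.rpow_le_rpow_of_nonpos hy (by linarith) (by linarith)
    · exact Real.rpow_le_rpow_of_nonpos hu (by linarith) (by linarith)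
  have hrest : Real.exp (-(y + u)) + ∑ i, (1 + (y + u)) ^ (-(s i + N)) ≤
      Real.exp (-u) + ∑ i, (1 + u) ^ (-(s i + N)) := by
    gcongr ?_ + ∑ i, ?_ with i
    · exact Real.exp_le_exp.2 (by linarith)
    · exact Real.rpow_le_rpow_of_nonpos (by positivity) (by linarith) (by linarith [hs i])
  have hrest0 : 0 ≤ Real.exp (-u) + ∑ i, (1 + u) ^ (-(s i + N)) :=
    add_nonneg (Real.exp_nonneg _) (Finset.sum_nonneg fun i _ => by positivity)
  rw [mul_left_comm, add_assoc, add_assoc, mul_add (y ^ (-p)), ← mul_assoc (y ^ (-p))]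
  gcongr
  · linarith
  · exact hrest.trans (le_mul_of_one_le_left hrest0 hyp)

lemma integral_expRemainder_add (hc : ExpSummable c) (hN : N ≠ 0) {b y : ℝ} (hb : 0 < b)
    (hs : ∀ i, b < s i + N) (hy : 0 < y) :
    ∫ u, expRemainder c a s N ((y + u : ℝ) : ℂ) ∂weylMeasure b =
      ∫ u, expSum (fun n => c n * (n : ℂ) ^ N) ((y + u : ℝ) : ℂ) ∂weylMeasure b -
        ∑ i, a i * (Real.Gamma (s i + N - b) / Real.Gamma (s i) * y ^ (-(s i + N - b)) : ℝ) := by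
  have hpolar := fun i => integrable_and_integral_polarTerm_add hb hy (hs i)
  simp only [expRemainder]
  rw [integral_sub (integrable_expSum_add_weylMeasure (hc.mul_pow N) (by simp [hN]) hb hy)
    (integrable_finsetSum _ fun i _ => (hpolar i).1.const_mul (a i)),
    integral_finsetSum _ fun i _ => (hpolar i).1.const_mul (a i)]
  simp only [integral_const_mul, (hpolar _).2]

lemma hasSum_mul_rpow_mul_exp (hc : ExpSummable c) (hN : N ≠ 0) {b y β : ℝ} (hβ : β ≠ 0)
    (hbβ : β + b = N) (hb : 0 < b) (hy : 0 < y) :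
    HasSum (fun n : ℕ => c n * ((n : ℝ) ^ β : ℝ) * Complex.exp (-y * n))
      (∫ u, expSum (fun n => c n * (n : ℂ) ^ N) ((y + u : ℝ) : ℂ) ∂weylMeasure b) := by
  have h := hasSum_mul_rpow_neg_mul_exp (hc.mul_pow N) (by simp [hN]) hb hy
  refine h.congr_fun fun n => ?_
  rcases Nat.eq_zero_or_pos n with rfl | hn
  · simp [hN, Real.zero_rpow hβ]
  have hpow : (n : ℝ) ^ β = (n : ℝ) ^ N * (n : ℝ) ^ (-b) := by
    rw [← Real.rpow_natCast, ← Real.rpow_add (Nat.cast_pos.2 hn), ← hbβ, add_neg_cancel_right]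
  rw [hpow]
  push_cast
  ring

theorem exists_norm_tsum_mul_rpow_mul_exp_sub_le (hc : ExpSummable c) {B : ℝ} (hB0 : 0 ≤ B)
    (hB : ∀ z ∈ truncatedSector, ‖expRemainder c a s 0 z‖ ≤ B * ‖z‖ ^ (-σ)) {β p : ℝ}
    (hβ : β ≠ 0) (hs : ∀ i, 0 < s i + β) (hp : 0 ≤ p) (hpσ : σ + β < p) :
    ∃ C : ℝ, 0 ≤ C ∧ ∀ y : ℝ, 0 < y → y ≤ 1 →
      Summable (fun n : ℕ => c n * ((n : ℝ) ^ β : ℝ) * Complex.exp (-y * n)) ∧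
      ‖∑' n : ℕ, c n * ((n : ℝ) ^ β : ℝ) * Complex.exp (-y * n) -
          ∑ i, a i * (Real.Gamma (s i + β) / Real.Gamma (s i) * y ^ (-(s i + β)) : ℝ)‖ ≤
        C * y ^ (-p) := by
  obtain ⟨N, hNlarge⟩ := exists_nat_gt (max 0 (max β (p - σ)))
  obtain ⟨hN0, hNβ, hNp⟩ : (0 : ℝ) < N ∧ β < N ∧ p - σ < N := by
    simpa only [max_lt_iff] using hNlarge
  have hN : N ≠ 0 := (Nat.cast_pos.1 hN0).ne'
  have hb : 0 < N - β := sub_pos.2 hNβ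
  have hsN : ∀ i, N - β < s i + N := fun i => by linarith [hs i]
  obtain ⟨g, hg, hbound⟩ := exists_integrable_norm_expRemainder_add_le hc hB0 hB hN hb hsN hp
    (by linarith) (by linarith)
  refine ⟨|∫ u, g u ∂weylMeasure (N - β)|, abs_nonneg _, fun y hy hy1 => ?_⟩
  have hsum := hasSum_mul_rpow_mul_exp hc hN hβ (add_sub_cancel β (N : ℝ)) hb hy
  have hsub : ∀ i, s i + N - (N - β) = s i + β := fun i => by ring
  have hrem := integral_expRemainder_add (a := a) hc hN hb hsN hy
  simp only [hsub] at hrem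
  refine ⟨hsum.summable, ?_⟩
  rw [hsum.tsum_eq, ← hrem]
  calc ‖∫ u, expRemainder c a s N ((y + u : ℝ) : ℂ) ∂weylMeasure (N - β)‖
      ≤ ∫ u, y ^ (-p) * g u ∂weylMeasure (N - β) :=
        norm_integral_le_of_norm_le (hg.const_mul _) <| by
          filter_upwards [ae_pos_weylMeasure (N - β)] with u hu using hbound y u hy hy1 hu
    _ ≤ |∫ u, g u ∂weylMeasure (N - β)| * y ^ (-p) := by
        rw [integral_const_mul, mul_comm]
        gcongr
        exact le_abs_self _

end AbelianTheorem

section GeneratingFunction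

lemma summable_norm_prod_fin {ι R : Type*} [NormedCommRing R] {f : ι → R}
    (hf : Summable fun i => ‖f i‖) (k : ℕ) :
    Summable fun v : Fin k → ι => ‖∏ i, f (v i)‖ := by
  induction k with
  | zero => exact (hasSum_fintype _).summable
  | succ k ih =>
    rw [← (Fin.consEquiv fun _ : Fin (k + 1) => ι).summable_iff]
    refine (hf.mul_norm ih).congr fun p => ?_
    simp [Fin.prod_univ_succ, Fin.consEquiv]

lemma tsum_prod_fin {ι R : Type*} [NormedCommRing R] [CompleteSpace R] {f : ι → R}
    (hf : Summable fun i => ‖f i‖) (k : ℕ) :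
    ∑' v : Fin k → ι, ∏ i, f (v i) = (∑' i, f i) ^ k := by
  induction k with
  | zero => simp [tsum_fintype]
  | succ k ih =>
    rw [← (Fin.consEquiv fun _ : Fin (k + 1) => ι).tsum_eq, pow_succ', ← ih,
      tsum_mul_tsum_of_summable_norm hf (summable_norm_prod_fin hf k)]
    refine tsum_congr fun p => ?_
    simp [Fin.prod_univ_succ, Fin.consEquiv]

lemma hasSum_card_le_mul_pow {α 𝕜 : Type*} [NormedField 𝕜] [CompleteSpace 𝕜] (w : α → ℕ) {q : 𝕜}
    (hq : ‖q‖ < 1) (hw : Summable fun a => ‖q ^ w a‖) :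
    HasSum (fun n : ℕ => (Nat.card {a // w a ≤ n} : 𝕜) * q ^ n)
      ((∑' a, q ^ w a) * (1 - q)⁻¹) := by
  have hgeom : Summable fun j : ℕ => ‖q ^ j‖ := by
    simpa using summable_geometric_of_lt_one (norm_nonneg _) hq
  have hsum := summable_mul_of_summable_norm hw hgeom
  rw [← tsum_geometric_of_norm_lt_one hq, tsum_mul_tsum_of_summable_norm hw hgeom]
  let degree : α × ℕ → ℕ := fun p => w p.1 + p.2
  refine ((Equiv.sigmaFiberEquiv degree).hasSum_iff.2 hsum.hasSum).sigma fun n => ?_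
  have hconst : ∀ p : {p // degree p = n}, q ^ w p.1.1 * q ^ p.1.2 = q ^ n := fun p => by
    rw [← pow_add]
    exact congrArg (q ^ ·) p.2
  have hcard : Nat.card {p // degree p = n} = Nat.card {a // w a ≤ n} :=
    Nat.card_congr
      { toFun := fun p => ⟨p.1.1, (Nat.le_add_right _ _).trans p.2.le⟩
        invFun := fun a => ⟨(a.1, n - w a.1), Nat.add_sub_of_le a.2⟩
        left_inv := by
          rintro ⟨⟨a, j⟩, rfl⟩
          simp [degree]
        right_inv := fun _ => rfl }
  have hfiber := ((Equiv.sigmaFiberEquiv degree).summable_iff.2 hsum).sigma_factor n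
  simp only [Function.comp_apply, Equiv.sigmaFiberEquiv, Equiv.coe_fn_mk, hconst] at hfiber ⊢
  rw [← hcard, ← nsmul_eq_mul, ← tsum_const]
  exact hfiber.hasSum

lemma Sk_natCast_eq_card (k n : ℕ) :
    Sk k n = Nat.card {v : Fin k → ℤ // ∑ i, (v i).natAbs ^ 2 ≤ n} := by
  refine Nat.card_congr (Equiv.subtypeEquivRight fun v => ?_)
  rw [← Nat.cast_le (α := ℝ)]
  simp

lemma exp_neg_pow_natAbs_sq (z : ℂ) (m : ℤ) :
    Complex.exp (-z) ^ m.natAbs ^ 2 = jacobiTheta₂_term m 0 (Complex.I * z / π) := by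
  have hcast : ((m.natAbs ^ 2 : ℕ) : ℂ) = (m : ℂ) ^ 2 := by
    rw [← Int.cast_pow, ← Int.natAbs_sq]
    norm_cast
  rw [jacobiTheta₂_term, ← Complex.exp_nat_mul, hcast]
  congr 1
  field_simp
  linear_combination -(m ^ 2 * z) * Complex.I_sq

lemma hasSum_Sk_mul_exp (k : ℕ) {z : ℂ} (hz : 0 < z.re) :
    HasSum (fun n : ℕ => (Sk k n : ℂ) * Complex.exp (-z * n))
      (jacobiTheta (Complex.I * z / π) ^ k * (1 - Complex.exp (-z))⁻¹) := by
  have hq : ‖Complex.exp (-z)‖ < 1 := by simpa [Complex.norm_exp] using hz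
  have htheta : Summable fun m : ℤ => ‖Complex.exp (-z) ^ m.natAbs ^ 2‖ := by
    simp only [exp_neg_pow_natAbs_sq]
    refine ((summable_jacobiTheta₂_term_iff 0 _).2 ?_).norm
    rw [Complex.div_ofReal_im, Complex.I_mul_im]
    positivity
  have hlattice : Summable fun v : Fin k → ℤ =>
      ‖Complex.exp (-z) ^ ∑ i, (v i).natAbs ^ 2‖ := by
    simpa only [Finset.prod_pow_eq_pow_sum] using summable_norm_prod_fin htheta k
  have h := hasSum_card_le_mul_pow _ hq hlattice
  simp only [← Finset.prod_pow_eq_pow_sum] at h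
  rw [tsum_prod_fin htheta] at h
  simp only [exp_neg_pow_natAbs_sq] at h
  simpa only [jacobiTheta_eq_jacobiTheta₂, jacobiTheta₂, ← Sk_natCast_eq_card,
    ← Complex.exp_nat_mul, mul_comm _ (-z)] using h

lemma expSummable_Sk (k : ℕ) : ExpSummable fun n => (Sk k n : ℂ) := fun x hx =>
  (hasSum_Sk_mul_exp k (z := x) hx).summable

end GeneratingFunction

section Theta

variable {z : ℂ}

lemma jacobiTheta_I_mul_div_pi (hz : 0 < z.re) :
    jacobiTheta (Complex.I * z / π) =
      ((π ^ (1 / 2 : ℝ) : ℝ) : ℂ) * z ^ ((-(1 / 2) : ℝ) : ℂ) *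
        jacobiTheta (Complex.I * π / z) := by
  have hz0 : z ≠ 0 := fun h => by simp [h] at hz
  have hinv : -1 / (Complex.I * z / π) = Complex.I * π / z := by
    field_simp
    rw [Complex.I_sq]
  have hrot : -Complex.I * (Complex.I * z / π) = ((π⁻¹ : ℝ) : ℂ) * z := by
    push_cast
    linear_combination -(z / π) * Complex.I_sq
  have hcpow : 1 / (((π⁻¹ : ℝ) : ℂ) * z) ^ (1 / 2 : ℂ) =
      ((π ^ (1 / 2 : ℝ) : ℝ) : ℂ) * z ^ ((-(1 / 2) : ℝ) : ℂ) := by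
    have hpi : ((π⁻¹ : ℝ) : ℂ) ≠ 0 := Complex.ofReal_ne_zero.2 (inv_ne_zero Real.pi_ne_zero)
    rw [one_div, ← Complex.cpow_neg, Complex.cpow_def_of_ne_zero (mul_ne_zero hpi hz0),
      Complex.cpow_def_of_ne_zero hz0, Complex.log_ofReal_mul (by positivity) hz0,
      Real.rpow_def_of_pos Real.pi_pos, Complex.ofReal_exp, ← Complex.exp_add, Real.log_inv]
    congr 1
    push_cast
    ring
  rw [jacobiTheta_eq_jacobiTheta₂, jacobiTheta₂_functional_equation, hinv, hrot, hcpow,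
    jacobiTheta_eq_jacobiTheta₂]
  simp

lemma jacobiTheta_I_mul_div_pi_pow (hz : 0 < z.re) (k : ℕ) :
    jacobiTheta (Complex.I * z / π) ^ k =
      ((π ^ ((k : ℝ) / 2) : ℝ) : ℂ) * z ^ ((-(k / 2) : ℝ) : ℂ) *
        jacobiTheta (Complex.I * π / z) ^ k := by
  rw [jacobiTheta_I_mul_div_pi hz, mul_pow, mul_pow, ← Complex.ofReal_pow,
    ← Real.rpow_mul_natCast Real.pi_pos.le, ← Complex.cpow_nat_mul]
  congr 3
  · ring_nf
  · push_cast
    ring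

lemma expSum_Sk_eq (k : ℕ) (hz : 0 < z.re) :
    expSum (fun n => (Sk k n : ℂ)) z =
      ((π ^ ((k : ℝ) / 2) : ℝ) : ℂ) * z ^ ((-(k / 2) : ℝ) : ℂ) *
        jacobiTheta (Complex.I * π / z) ^ k * (1 - Complex.exp (-z))⁻¹ := by
  rw [expSum, (hasSum_Sk_mul_exp k hz).tsum_eq, jacobiTheta_I_mul_div_pi_pow hz]

lemma three_div_norm_le_pi_mul_im (hz : z ∈ truncatedSector) :
    3 / ‖z‖ ≤ π * (Complex.I * π / z).im := by
  obtain ⟨hre, hsector, -⟩ := hz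
  have hz0 : z ≠ 0 := fun h => by simp [h] at hre
  have him : π * (Complex.I * π / z).im = π ^ 2 * z.re / ‖z‖ ^ 2 := by
    rw [← Complex.normSq_eq_norm_sq, Complex.div_im]
    simp only [Complex.mul_im, Complex.mul_re, Complex.I_re, Complex.I_im, Complex.ofReal_re,
      Complex.ofReal_im, mul_zero, zero_mul, one_mul, zero_add, zero_div, sub_self, sub_zero]
    ring
  have hnorm : 0 < ‖z‖ := norm_pos_iff.2 hz0
  have hpi : (9 : ℝ) ≤ π ^ 2 := by nlinarith [Real.pi_gt_three]
  rw [him, div_le_div_iff₀ hnorm (by positivity)]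
  calc 3 * ‖z‖ ^ 2 = 3 * ‖z‖ * ‖z‖ := by ring
    _ ≤ 3 * (3 * z.re) * ‖z‖ := by gcongr
    _ = 9 * z.re * ‖z‖ := by ring
    _ ≤ π ^ 2 * z.re * ‖z‖ := by gcongr

lemma norm_jacobiTheta_I_mul_pi_div_sub_one_le (hz : z ∈ truncatedSector) :
    ‖jacobiTheta (Complex.I * π / z) - 1‖ ≤ ‖z‖ ^ 4 := by
  have hnorm : 0 < ‖z‖ := (hz.1.trans_le (le_abs_self _)).trans_le (Complex.abs_re_le_norm z)
  have him := three_div_norm_le_pi_mul_im hz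
  have h3 : 3 ≤ 3 / ‖z‖ := by
    rw [le_div_iff₀ hnorm]
    linarith [hz.2.2]
  have himpos : 0 < (Complex.I * π / z).im := pos_of_mul_pos_right (by linarith) Real.pi_pos.le
  set q := Real.exp (-π * (Complex.I * π / z).im)
  have hqle : q ≤ 24 / 81 * ‖z‖ ^ 4 := by
    have hexp := Real.pow_div_factorial_le_exp (3 / ‖z‖) (by positivity) 4
    calc q ≤ Real.exp (-(3 / ‖z‖)) := Real.exp_le_exp.2 (by linarith)
      _ = (Real.exp (3 / ‖z‖))⁻¹ := Real.exp_neg _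
      _ ≤ ((3 / ‖z‖) ^ 4 / (Nat.factorial 4 : ℕ))⁻¹ := by gcongr
      _ = 24 / 81 * ‖z‖ ^ 4 := by
        rw [show Nat.factorial 4 = 24 from rfl]
        field_simp
        norm_num
  have hpow : ‖z‖ ^ 4 ≤ 1 := pow_le_one₀ hnorm.le hz.2.2
  calc ‖jacobiTheta (Complex.I * π / z) - 1‖ ≤ 2 / (1 - q) * q :=
        norm_jacobiTheta_sub_one_le himpos
    _ ≤ 2 / (1 - 24 / 81) * (24 / 81 * ‖z‖ ^ 4) := by
        gcongr
        linarith
    _ ≤ ‖z‖ ^ 4 := by linarith [pow_pos hnorm 4]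

end Theta

section Expansion

variable {z : ℂ}

lemma norm_div_four_le_norm_one_sub_exp_neg (hz : ‖z‖ ≤ 1) :
    ‖z‖ / 4 ≤ ‖1 - Complex.exp (-z)‖ := by
  have h := Complex.exp_bound (x := -z) (by rwa [norm_neg]) (n := 2) (by norm_num)
  norm_num [Finset.sum_range_succ] at h
  have htriangle : ‖z‖ ≤ ‖1 - Complex.exp (-z)‖ + ‖Complex.exp (-z) - (1 + -z)‖ :=
    calc ‖z‖ = ‖(1 - Complex.exp (-z)) + (Complex.exp (-z) - (1 + -z))‖ := by
          congr 1
          ring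
      _ ≤ _ := norm_add_le _ _
  nlinarith [norm_nonneg z]

lemma norm_inv_one_sub_exp_neg_le (hz0 : z ≠ 0) (hz : ‖z‖ ≤ 1) :
    ‖(1 - Complex.exp (-z))⁻¹‖ ≤ 4 / ‖z‖ := by
  rw [norm_inv, ← inv_div]
  exact inv_anti₀ (by positivity) (norm_div_four_le_norm_one_sub_exp_neg hz)

lemma norm_one_sub_mul_laurent_le (hz0 : z ≠ 0) (hz : ‖z‖ ≤ 1) :
    ‖1 - (1 - Complex.exp (-z)) * (1 / z + 1 / 2 + z / 12)‖ ≤ ‖z‖ ^ 4 / 4 := by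
  have hpos : 0 < ‖z‖ := norm_pos_iff.2 hz0
  set R := Complex.exp (-z) - (1 - z + z ^ 2 / 2 - z ^ 3 / 6 + z ^ 4 / 24) with hR
  have hRle : ‖R‖ ≤ ‖z‖ ^ 5 / 100 := by
    have h := Complex.exp_bound (x := -z) (by rwa [norm_neg]) (n := 5) (by norm_num)
    norm_num [Finset.sum_range_succ, Nat.factorial] at h
    refine le_trans (le_of_eq ?_) (h.trans_eq ?_)
    · rw [hR]
      ring_nf
    · ring
  have hlaurent : ‖1 / z + 1 / 2 + z / 12‖ ≤ 1 / ‖z‖ + 1 / 2 + ‖z‖ / 12 :=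
    norm_add₃_le.trans_eq (by simp)
  have hsplit : 1 - (1 - Complex.exp (-z)) * (1 / z + 1 / 2 + z / 12) =
      z ^ 4 / 144 + z ^ 5 / 288 + R * (1 / z + 1 / 2 + z / 12) := by
    rw [hR]
    field_simp
    ring
  calc ‖1 - (1 - Complex.exp (-z)) * (1 / z + 1 / 2 + z / 12)‖
      ≤ ‖z ^ 4 / 144‖ + ‖z ^ 5 / 288‖ + ‖R * (1 / z + 1 / 2 + z / 12)‖ := by
        rw [hsplit]
        exact norm_add₃_le
    _ ≤ ‖z‖ ^ 4 / 144 + ‖z‖ ^ 5 / 288 +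
          ‖z‖ ^ 5 / 100 * (1 / ‖z‖ + 1 / 2 + ‖z‖ / 12) := by
        rw [norm_mul]
        gcongr
        all_goals simp
    _ = ‖z‖ ^ 4 * (1 / 144 + ‖z‖ / 288 + (1 + ‖z‖ / 2 + ‖z‖ ^ 2 / 12) / 100) := by
        field_simp
    _ ≤ ‖z‖ ^ 4 * (1 / 144 + 1 / 288 + (1 + 1 / 2 + 1 ^ 2 / 12) / 100) := by gcongr
    _ ≤ ‖z‖ ^ 4 / 4 := by linarith [pow_pos hpos 4]

lemma norm_inv_one_sub_exp_neg_sub_le (hz0 : z ≠ 0) (hz : ‖z‖ ≤ 1) :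
    ‖(1 - Complex.exp (-z))⁻¹ - (1 / z + 1 / 2 + z / 12)‖ ≤ ‖z‖ ^ 3 := by
  have hne : 1 - Complex.exp (-z) ≠ 0 := norm_pos_iff.1
    ((by positivity : 0 < ‖z‖ / 4).trans_le (norm_div_four_le_norm_one_sub_exp_neg hz))
  have hfactor : (1 - Complex.exp (-z))⁻¹ - (1 / z + 1 / 2 + z / 12) =
      (1 - (1 - Complex.exp (-z)) * (1 / z + 1 / 2 + z / 12)) * (1 - Complex.exp (-z))⁻¹ := by
    rw [sub_mul, one_mul, mul_right_comm, mul_inv_cancel₀ hne, one_mul]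
  calc ‖(1 - Complex.exp (-z))⁻¹ - (1 / z + 1 / 2 + z / 12)‖ ≤ ‖z‖ ^ 4 / 4 * (4 / ‖z‖) := by
        rw [hfactor, norm_mul]
        gcongr
        · exact norm_one_sub_mul_laurent_le hz0 hz
        · exact norm_inv_one_sub_exp_neg_le hz0 hz
    _ = ‖z‖ ^ 3 := by field_simp

lemma norm_pow_sub_one_le {R : Type*} [NormedRing R] [NormOneClass R] {w : R} {M : ℝ}
    (hM : 1 ≤ M) (hw : ‖w‖ ≤ M) (k : ℕ) : ‖w ^ k - 1‖ ≤ k * M ^ k * ‖w - 1‖ := by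
  rw [← geom_sum_mul]
  refine (norm_mul_le _ _).trans (mul_le_mul_of_nonneg_right ?_ (norm_nonneg _))
  calc ‖∑ i ∈ Finset.range k, w ^ i‖ ≤ ∑ _ ∈ Finset.range k, M ^ k := by
        refine norm_sum_le_of_le _ fun i hi => (norm_pow_le w i).trans ?_
        exact (pow_le_pow_left₀ (norm_nonneg _) hw i).trans
          (pow_le_pow_right₀ hM (Finset.mem_range.1 hi).le)
    _ = k * M ^ k := by simp

/-- The coefficients of the expansion `∑ S_k(n) e^{-nz} ≈ ∑ᵢ aᵢ z^{-sᵢ}` at `z = 0`. -/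
noncomputable def latticeCoeff (k : ℕ) : Fin 3 → ℝ :=
  ![π ^ ((k : ℝ) / 2), π ^ ((k : ℝ) / 2) / 2, π ^ ((k : ℝ) / 2) / 12]

/-- The exponents of the expansion `∑ S_k(n) e^{-nz} ≈ ∑ᵢ aᵢ z^{-sᵢ}` at `z = 0`. -/
noncomputable def latticeExponent (k : ℕ) : Fin 3 → ℝ :=
  ![(k : ℝ) / 2 + 1, (k : ℝ) / 2, (k : ℝ) / 2 - 1]

lemma sum_latticeCoeff_mul_polarTerm (k : ℕ) (hz0 : z ≠ 0) :
    ∑ i, (latticeCoeff k i : ℂ) * polarTerm (latticeExponent k i) 0 z =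
      ((π ^ ((k : ℝ) / 2) : ℝ) : ℂ) * z ^ ((-(k / 2) : ℝ) : ℂ) * (1 / z + 1 / 2 + z / 12) := by
  have hshift : ∀ t : ℝ, z ^ ((-(k / 2 + t) : ℝ) : ℂ) =
      z ^ ((-(k / 2) : ℝ) : ℂ) * z ^ ((-t : ℝ) : ℂ) := fun t => by
    rw [← Complex.cpow_add _ _ hz0, neg_add, Complex.ofReal_add]
  have hlead : z ^ ((-(k / 2 + 1) : ℝ) : ℂ) = z ^ ((-(k / 2) : ℝ) : ℂ) * z⁻¹ := by
    rw [hshift, ← Complex.cpow_neg_one]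
    push_cast
    rfl
  have hlast : z ^ ((-(k / 2 - 1) : ℝ) : ℂ) = z ^ ((-(k / 2) : ℝ) : ℂ) * z := by
    rw [sub_eq_add_neg, hshift, neg_neg, Complex.ofReal_one, Complex.cpow_one]
  simp only [Fin.sum_univ_three, latticeCoeff, latticeExponent, polarTerm_zero,
    Matrix.cons_val, hlead, hlast]
  push_cast
  ring

lemma expRemainder_Sk_eq (k : ℕ) (hz : 0 < z.re) :
    expRemainder (fun n => (Sk k n : ℂ)) (fun i => latticeCoeff k i) (latticeExponent k) 0 z =
      ((π ^ ((k : ℝ) / 2) : ℝ) : ℂ) * z ^ ((-(k / 2) : ℝ) : ℂ) *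
        ((jacobiTheta (Complex.I * π / z) ^ k - 1) * (1 - Complex.exp (-z))⁻¹ +
          ((1 - Complex.exp (-z))⁻¹ - (1 / z + 1 / 2 + z / 12))) := by
  have hz0 : z ≠ 0 := fun h => by simp [h] at hz
  rw [expRemainder, sum_latticeCoeff_mul_polarTerm k hz0]
  simp only [pow_zero, mul_one]
  rw [expSum_Sk_eq k hz]
  ring

lemma norm_expRemainder_Sk_le (k : ℕ) (hz : z ∈ truncatedSector) :
    ‖expRemainder (fun n => (Sk k n : ℂ)) (fun i => latticeCoeff k i) (latticeExponent k) 0 z‖ ≤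
      π ^ ((k : ℝ) / 2) * (4 * k * 2 ^ k + 1) * ‖z‖ ^ (-((k : ℝ) / 2 - 3)) := by
  have hz0 : z ≠ 0 := fun h => hz.1.ne' (by simp [h])
  have hpos : 0 < ‖z‖ := norm_pos_iff.2 hz0
  have htheta := norm_jacobiTheta_I_mul_pi_div_sub_one_le hz
  have htheta2 : ‖jacobiTheta (Complex.I * π / z)‖ ≤ 2 := by
    have h := norm_sub_norm_le (jacobiTheta (Complex.I * π / z)) 1
    rw [norm_one] at h
    linarith [pow_le_one₀ (n := 4) hpos.le hz.2.2]
  have hpow : ‖z‖ ^ (-((k : ℝ) / 2 - 3)) = ‖z‖ ^ (-((k : ℝ) / 2)) * ‖z‖ ^ 3 := by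
    rw [neg_sub, sub_eq_neg_add, Real.rpow_add hpos]
    norm_cast
  rw [expRemainder_Sk_eq k hz.1, norm_mul, norm_mul, Complex.norm_cpow_real, Complex.norm_real,
    Real.norm_of_nonneg (by positivity), hpow]
  calc π ^ ((k : ℝ) / 2) * ‖z‖ ^ (-((k : ℝ) / 2)) *
        ‖(jacobiTheta (Complex.I * π / z) ^ k - 1) * (1 - Complex.exp (-z))⁻¹ +
          ((1 - Complex.exp (-z))⁻¹ - (1 / z + 1 / 2 + z / 12))‖
      ≤ π ^ ((k : ℝ) / 2) * ‖z‖ ^ (-((k : ℝ) / 2)) *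
          (k * 2 ^ k * ‖z‖ ^ 4 * (4 / ‖z‖) + ‖z‖ ^ 3) := by
        refine mul_le_mul_of_nonneg_left (norm_add_le_of_le ?_
          (norm_inv_one_sub_exp_neg_sub_le hz0 hz.2.2)) (by positivity)
        rw [norm_mul]
        gcongr
        · exact (norm_pow_sub_one_le one_le_two htheta2 k).trans (by gcongr)
        · exact norm_inv_one_sub_exp_neg_le hz0 hz.2.2
    _ = _ := by
        field_simp

end Expansion

section Moments

variable {k : ℕ} {β p : ℝ}

/-- The main term of `∑ S_k(n) n^β e^{-ny}` as `y → 0`, obtained from the expansion of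
`∑ S_k(n) e^{-nz}` by replacing each `z^{-s}` with `Γ(s + β) / Γ(s) · y^{-(s + β)}`. -/
noncomputable def momentMainTerm (k : ℕ) (β y : ℝ) : ℝ :=
  ∑ i, latticeCoeff k i * (Real.Gamma (latticeExponent k i + β) /
    Real.Gamma (latticeExponent k i) * y ^ (-(latticeExponent k i + β)))

lemma latticeExponent_ge (k : ℕ) (i : Fin 3) : (k : ℝ) / 2 - 1 ≤ latticeExponent k i := by
  fin_cases i <;> simp [latticeExponent]
  linarith

theorem exists_abs_tsum_Sk_mul_rpow_sub_le (hβ : β ≠ 0) (hkβ : 0 < k / 2 - 1 + β) (hp : 0 ≤ p)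
    (hkp : k / 2 - 3 + β < p) :
    ∃ C : ℝ, 0 ≤ C ∧ ∀ y : ℝ, 0 < y → y ≤ 1 →
      Summable (fun n : ℕ => (Sk k n : ℝ) * (n : ℝ) ^ β * Real.exp (-y * n)) ∧
      |∑' n : ℕ, (Sk k n : ℝ) * (n : ℝ) ^ β * Real.exp (-y * n) - momentMainTerm k β y| ≤
        C * y ^ (-p) := by
  obtain ⟨C, hC0, hC⟩ := exists_norm_tsum_mul_rpow_mul_exp_sub_le (expSummable_Sk k)
    (by positivity) (fun z hz => norm_expRemainder_Sk_le k hz) hβ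
    (fun i => hkβ.trans_le (by linarith [latticeExponent_ge k i])) hp hkp
  refine ⟨C, hC0, fun y hy hy1 => ?_⟩
  have h := hC y hy hy1
  have hterm : ∀ n : ℕ, (Sk k n : ℂ) * ((n : ℝ) ^ β : ℝ) * Complex.exp (-y * n) =
      ((Sk k n * (n : ℝ) ^ β * Real.exp (-y * n) : ℝ) : ℂ) := fun n => by push_cast; rfl
  simp only [hterm, ← Complex.ofReal_mul, ← Complex.ofReal_sum, ← Complex.ofReal_tsum,
    ← Complex.ofReal_sub, Complex.norm_real, Complex.summable_ofReal] at h
  exact h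

lemma Sk_zero_natCast (n : ℕ) : Sk 0 n = 1 := by
  rw [Sk_natCast_eq_card]
  simp

/-- Only the leading term survives: the Laurent expansion of `∑ e^{-nz}` has no other polar term,
which is recorded here by `Γ(0) = Γ(-1) = 0` and `x / 0 = 0`. -/
lemma momentMainTerm_zero (β y : ℝ) :
    momentMainTerm 0 β y = Real.Gamma (1 + β) * y ^ (-(1 + β)) := by
  have hΓ : Real.Gamma (-1) = 0 := by simpa using Real.Gamma_neg_nat_eq_zero 1
  simp [momentMainTerm, latticeCoeff, latticeExponent, Fin.sum_univ_three, hΓ]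

lemma momentMainTerm_half_sub_one (k : ℕ) (y : ℝ) :
    momentMainTerm k (k / 2 - 1) y =
      Vk k * momentMainTerm 0 (k - 1) y +
        π ^ ((k : ℝ) / 2) * Real.Gamma (k - 1) / (2 * Real.Gamma (k / 2)) * y ^ (-(k - 1 : ℝ)) +
        π ^ ((k : ℝ) / 2) * Real.Gamma (k - 2) / (12 * Real.Gamma (k / 2 - 1)) *
          y ^ (-(k - 2 : ℝ)) := by
  have h₀ : (k : ℝ) / 2 + 1 + (k / 2 - 1) = k := by ring
  have h₁ : (k : ℝ) / 2 + (k / 2 - 1) = k - 1 := by ring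
  have h₂ : (k : ℝ) / 2 - 1 + (k / 2 - 1) = k - 2 := by ring
  rw [momentMainTerm_zero, momentMainTerm]
  simp only [Fin.sum_univ_three, latticeCoeff, latticeExponent, Matrix.cons_val, h₀, h₁, h₂, Vk,
    add_sub_cancel]
  ring

lemma Pk_mul_rpow_half_sub_one (hk : 2 ≤ k) (n : ℕ) :
    Pk k n * (n : ℝ) ^ ((k : ℝ) / 2 - 1) =
      Sk k n * (n : ℝ) ^ ((k : ℝ) / 2 - 1) - Vk k * (Sk 0 n * (n : ℝ) ^ ((k : ℝ) - 1)) := by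
  have hk2 : (2 : ℝ) ≤ k := by exact_mod_cast hk
  have hpow : (n : ℝ) ^ ((k : ℝ) - 1) = (n : ℝ) ^ ((k : ℝ) / 2) * (n : ℝ) ^ ((k : ℝ) / 2 - 1) := by
    rw [← Real.rpow_add' n.cast_nonneg (by linarith)]
    ring_nf
  rw [Pk, hpow, Sk_zero_natCast]
  push_cast
  ring

theorem exists_abs_tsum_Pk_mul_rpow_sub_le (hk : 3 ≤ k) :
    ∃ C : ℝ, 0 ≤ C ∧ ∀ y : ℝ, 0 < y → y ≤ 1 →
      Summable (fun n : ℕ => Pk k n * (n : ℝ) ^ ((k : ℝ) / 2 - 1) * Real.exp (-y * n)) ∧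
      |∑' n : ℕ, Pk k n * (n : ℝ) ^ ((k : ℝ) / 2 - 1) * Real.exp (-y * n) -
          π ^ ((k : ℝ) / 2) * Real.Gamma (k - 1) / (2 * Real.Gamma (k / 2)) * y ^ (-(k - 1 : ℝ)) -
          π ^ ((k : ℝ) / 2) * Real.Gamma (k - 2) / (12 * Real.Gamma (k / 2 - 1)) *
            y ^ (-(k - 2 : ℝ))| ≤ C * y ^ (-(k - 3 : ℝ)) := by
  have hk3 : (3 : ℝ) ≤ k := by exact_mod_cast hk
  obtain ⟨C, hC0, hC⟩ := exists_abs_tsum_Sk_mul_rpow_sub_le (k := k) (β := k / 2 - 1)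
    (p := k - 3) (by linarith) (by linarith) (by linarith) (by linarith)
  obtain ⟨D, hD0, hD⟩ := exists_abs_tsum_Sk_mul_rpow_sub_le (k := 0) (β := k - 1)
    (p := k - 3) (by linarith) (by norm_num; linarith) (by linarith) (by norm_num)
  refine ⟨C + |Vk k| * D, by positivity, fun y hy hy1 => ?_⟩
  obtain ⟨hsumS, hS⟩ := hC y hy hy1
  obtain ⟨hsumV, hV⟩ := hD y hy hy1
  have hterm : ∀ n : ℕ, Pk k n * (n : ℝ) ^ ((k : ℝ) / 2 - 1) * Real.exp (-y * n) =
      Sk k n * (n : ℝ) ^ ((k : ℝ) / 2 - 1) * Real.exp (-y * n) -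
        Vk k * (Sk 0 n * (n : ℝ) ^ ((k : ℝ) - 1) * Real.exp (-y * n)) := fun n => by
    rw [Pk_mul_rpow_half_sub_one (by lia)]
    ring
  simp only [hterm]
  refine ⟨hsumS.sub (hsumV.mul_left _), ?_⟩
  rw [momentMainTerm_half_sub_one] at hS
  rw [hsumS.tsum_sub (hsumV.mul_left _), tsum_mul_left]
  have hVk := mul_le_mul_of_nonneg_left hV (abs_nonneg (Vk k))
  rw [← abs_mul] at hVk
  refine le_trans (le_of_eq ?_) ((abs_sub _ _).trans (add_le_add hS hVk)) |>.trans_eq ?_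
  · congr 1
    ring
  · ring

end Moments

theorem smoothed_first_moment_general (k : ℕ) (hk : 3 ≤ k) :
    ∃ A : ℝ, 0 < A ∧ ∀ X : ℝ, 1 ≤ X →
      Summable (fun n : ℕ =>
        |Pk k ((n : ℝ) + 1) * ((n : ℝ) + 1) ^ ((k : ℝ) / 2 - 1)
          * Real.exp (-((n : ℝ) + 1) / X)|) ∧
      |(∑' n : ℕ, Pk k ((n : ℝ) + 1) * ((n : ℝ) + 1) ^ ((k : ℝ) / 2 - 1)
            * Real.exp (-((n : ℝ) + 1) / X))
          - (Real.pi ^ ((k : ℝ) / 2) * Real.Gamma ((k : ℝ) - 1)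
              / (2 * Real.Gamma ((k : ℝ) / 2))) * X ^ ((k : ℝ) - 1)
          - (Real.pi ^ ((k : ℝ) / 2) * Real.Gamma ((k : ℝ) - 2)
              / (12 * Real.Gamma ((k : ℝ) / 2 - 1))) * X ^ ((k : ℝ) - 2)|
        ≤ A * X ^ ((k : ℝ) - 3) := by
  have hk3 : (3 : ℝ) ≤ k := by exact_mod_cast hk
  obtain ⟨C, hC0, hC⟩ := exists_abs_tsum_Pk_mul_rpow_sub_le hk
  refine ⟨C + 1, by positivity, fun X hX => ?_⟩
  have hX0 : 0 ≤ X := by linarith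
  obtain ⟨hsum, hbound⟩ := hC X⁻¹ (by positivity) (inv_le_one_of_one_le₀ hX)
  have hexp : ∀ n : ℕ, -((n : ℝ) + 1) / X = -X⁻¹ * (n + 1) := fun n => by ring
  simp only [hsum.tsum_eq_zero_add, Nat.cast_zero,
    Real.zero_rpow (by linarith : (k : ℝ) / 2 - 1 ≠ 0), mul_zero, zero_mul, zero_add,
    Real.rpow_neg (inv_nonneg.2 hX0), Real.inv_rpow hX0, inv_inv] at hbound
  simp only [hexp]
  simp only [← Nat.cast_add_one]
  refine ⟨((summable_nat_add_iff 1).2 hsum).abs, hbound.trans ?_⟩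
  gcongr
  linarith

/-- smoothed first moment of `P_k(n) n^{k/2−1}`. -/
theorem smoothed_first_moment (k : ℕ) (hk : 3 ≤ k) :
    ∀ ε : ℝ, 0 < ε → ∃ A : ℝ, 0 < A ∧ ∀ X : ℝ, 2 ≤ X →
      Summable (fun n : ℕ =>
        |Pk k ((n : ℝ) + 1) * ((n : ℝ) + 1) ^ ((k : ℝ) / 2 - 1)
          * Real.exp (-((n : ℝ) + 1) / X)|) ∧
      |(∑' n : ℕ, Pk k ((n : ℝ) + 1) * ((n : ℝ) + 1) ^ ((k : ℝ) / 2 - 1)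
            * Real.exp (-((n : ℝ) + 1) / X))
          - (Real.pi ^ ((k : ℝ) / 2) * Real.Gamma ((k : ℝ) - 1)
              / (2 * Real.Gamma ((k : ℝ) / 2))) * X ^ ((k : ℝ) - 1)
          - (Real.pi ^ ((k : ℝ) / 2) * Real.Gamma ((k : ℝ) - 2)
              / (12 * Real.Gamma ((k : ℝ) / 2 - 1))) * X ^ ((k : ℝ) - 2)|
        ≤ A * X ^ ((k : ℝ) - 3 + ε) := by
  intro ε hε
  obtain ⟨A, hA0, hA⟩ := smoothed_first_moment_general k hk
  refine ⟨A, hA0, fun X hX => ?_⟩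
  obtain ⟨hsum, hbound⟩ := hA X (by linarith)
  refine ⟨hsum, hbound.trans ?_⟩
  gcongr <;> linarith
end

section
/- For every s ∈ ℂ with Re s > 3, the series ∑_{m≥1} r_4(m)²/m^s converges absolutely and (1/64) ∑_{m≥1} r_4(m)²/m^s = (2^{6−3s} − 5·2^{3−2s} + 2^{1−s} + 1) ζ(s−2) ζ(s−1)² ζ(s) / ((1 + 2^{1−s}) ζ(2s−2)). -/
open scoped Real

open Complex

/-
Let `J(n)` be the sum of the divisors of `n` not divisible by `4`. Both `r_4` and `8 J`, the latter
with the value `1` at `0`, satisfy `∑_i (n - 5 i²) a(n - i²) = 0` for `n > 0`, which together with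
`a(0)` determines `a`, so `r_4 = 8 J` away from `0` (Jacobi). For `r_4`, this holds because the five
coordinates of the integer points with `v_0² + ⋯ + v_4² = n` have the same second moment. For `J`,
the left-hand side is a sum over the solutions of `i² + d e = n`, which Liouville's involutions of
that set collapse to a diagonal that is empty unless `n` is a square.

The function `J` is multiplicative and agrees with `σ` at powers of odd primes, so the Dirichlet
series of `J²` differs only by its Euler factor at `2` from Ramanujan's
`∑ σ(n)² n^{-s} = ζ(s) ζ(s - 1)² ζ(s - 2) / ζ(2 s - 2)`.
-/

section Liouville

open Finset

/-- The solutions `(i, d, e)` of `i² + d e = n` with `d, e > 0`, the summation range of Liouville's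
identities. The bounding box only serves to make this set a `Finset`. -/
noncomputable def liouvilleSet (n : ℤ) : Finset (ℤ × ℤ × ℤ) :=
  {x ∈ Icc (-n) n ×ˢ Icc 1 n ×ˢ Icc 1 n | x.1 ^ 2 + x.2.1 * x.2.2 = n}

theorem mem_liouvilleSet {n i d e : ℤ} :
    (i, d, e) ∈ liouvilleSet n ↔ 0 < d ∧ 0 < e ∧ i ^ 2 + d * e = n := by
  simp only [liouvilleSet, mem_filter, mem_product, mem_Icc]
  constructor
  · rintro ⟨⟨-, ⟨hd, -⟩, he, -⟩, h⟩
    exact ⟨by omega, by omega, h⟩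
  · rintro ⟨hd, he, h⟩
    have hde : 0 < d * e := mul_pos hd he
    have hi : |i| ≤ i ^ 2 := Int.natCast_natAbs i ▸ Int.natAbs_le_self_sq i
    exact ⟨⟨abs_le.1 (by omega), ⟨hd, by nlinarith⟩, he, by nlinarith⟩, h⟩

section AddCommMonoid

variable {M : Type*} [AddCommMonoid M] (f : ℤ → ℤ → ℤ → M)

theorem sum_liouvilleSet_neg (n : ℤ) :
    ∑ x ∈ liouvilleSet n, f (-x.1) x.2.1 x.2.2 = ∑ x ∈ liouvilleSet n, f x.1 x.2.1 x.2.2 := by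
  refine sum_nbij' (fun x => (-x.1, x.2)) (fun x => (-x.1, x.2)) ?_ ?_ ?_ ?_ ?_ <;>
    simp +contextual [mem_liouvilleSet]

theorem sum_liouvilleSet_swap (n : ℤ) :
    ∑ x ∈ liouvilleSet n, f x.1 x.2.2 x.2.1 = ∑ x ∈ liouvilleSet n, f x.1 x.2.1 x.2.2 := by
  refine sum_nbij' (fun x => (x.1, x.2.swap)) (fun x => (x.1, x.2.swap)) ?_ ?_ ?_ ?_ ?_ <;>
    simp +contextual [mem_liouvilleSet, mul_comm]

theorem sum_liouvilleSet_eq_sum_divisorsAntidiagonal (n : ℤ) :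
    ∑ x ∈ liouvilleSet n, f x.1 x.2.1 x.2.2 =
      ∑ i ∈ Icc (-n) n, ∑ p ∈ (n - i ^ 2).toNat.divisorsAntidiagonal, f i p.1 p.2 := by
  rw [sum_sigma']
  refine sum_nbij' (fun x => ⟨x.1, x.2.1.toNat, x.2.2.toNat⟩) (fun x => (x.1, x.2.1, x.2.2))
    ?_ ?_ ?_ ?_ ?_
  · rintro ⟨i, d, e⟩ hx
    have hi : i ∈ Icc (-n) n := (mem_product.1 (mem_filter.1 hx).1).1
    obtain ⟨hd, he, h⟩ := mem_liouvilleSet.1 hx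
    have hde : n - i ^ 2 = d * e := by rw [← h]; ring
    have hpos : 0 < n - i ^ 2 := hde ▸ mul_pos hd he
    refine mem_sigma.2 ⟨hi, Nat.mem_divisorsAntidiagonal.2 ⟨?_, by simpa using hpos⟩⟩
    rw [hde, Int.toNat_mul hd.le he.le]
  · rintro ⟨i, d, e⟩ hx
    obtain ⟨h, h0⟩ := Nat.mem_divisorsAntidiagonal.1 (mem_sigma.1 hx).2
    dsimp only at h h0
    obtain ⟨hd, he⟩ := mul_ne_zero_iff.1 (h ▸ h0)
    have hde : (d * e : ℤ) = n - i ^ 2 := by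
      rw [← Nat.cast_mul, h, Int.toNat_of_nonneg (by omega)]
    exact mem_liouvilleSet.2 ⟨by positivity, by positivity, by rw [hde]; ring⟩
  · rintro ⟨i, d, e⟩ hx
    obtain ⟨hd, he, -⟩ := mem_liouvilleSet.1 hx
    simp [hd.le, he.le]
  · simp
  · rintro ⟨i, d, e⟩ hx
    obtain ⟨hd, he, -⟩ := mem_liouvilleSet.1 hx
    simp [hd.le, he.le]

theorem sum_diagonal_liouvilleSet_sq (k : ℕ) :
    ∑ x ∈ liouvilleSet (k ^ 2) with x.2.2 = 2 * x.1 + x.2.1, f x.1 x.2.1 x.2.2 =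
      ∑ d ∈ Ioo 0 (2 * k), f (k - d) d (2 * k - d) := by
  have key {i d e : ℤ} (hx : (i, d, e) ∈ {x ∈ liouvilleSet (k ^ 2) | x.2.2 = 2 * x.1 + x.2.1}) :
      0 < d ∧ 0 < e ∧ e = 2 * i + d ∧ i + d = k := by
    obtain ⟨hx, rfl : e = 2 * i + d⟩ := mem_filter.1 hx
    obtain ⟨hd, he, h⟩ := mem_liouvilleSet.1 hx
    refine ⟨hd, he, rfl, (sq_eq_sq₀ (by omega) (by omega)).1 ?_⟩
    rw [← h]; ring
  refine sum_nbij' (fun x => x.2.1.toNat) (fun d => (k - d, d, 2 * k - d)) ?_ ?_ ?_ ?_ ?_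
  · rintro ⟨i, d, e⟩ hx
    obtain ⟨hd, he, hdiag, hk⟩ := key hx
    simp only [mem_Ioo]
    omega
  · intro d hd
    obtain ⟨hd0, hdk⟩ := mem_Ioo.1 hd
    exact mem_filter.2 ⟨mem_liouvilleSet.2 ⟨by omega, by omega, by ring⟩, by ring⟩
  · rintro ⟨i, d, e⟩ hx
    obtain ⟨hd, -, hdiag, hk⟩ := key hx
    simp only [Prod.mk.injEq]
    omega
  · simp
  · rintro ⟨i, d, e⟩ hx
    obtain ⟨hd, -, hdiag, hk⟩ := key hx
    simp only
    congr 1 <;> omega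

end AddCommMonoid

theorem diagonal_liouvilleSet_eq_empty {n : ℤ} (hn : ¬IsSquare n) :
    {x ∈ liouvilleSet n | x.2.2 = 2 * x.1 + x.2.1} = ∅ := by
  refine filter_eq_empty_iff.2 ?_
  rintro ⟨i, d, e⟩ hx (rfl : e = 2 * i + d)
  obtain ⟨-, -, h⟩ := mem_liouvilleSet.1 hx
  exact hn ⟨i + d, by rw [← h]; ring⟩

section Reflection

variable {M : Type*} [AddCommGroup M] [IsAddTorsionFree M] {f : ℤ → ℤ → ℤ → M}

-- The reflection `(i, d, e) ↦ (-(i + d), d, e - 2 i - d)` is an involution of the summation range,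
-- since `(i + d)² + d (e - 2 i - d) = i² + d e`.
theorem sum_liouvilleSet_filter_lt_eq_zero
    (hreflect : ∀ i d e, f (-(i + d)) d (e - 2 * i - d) = -f i d e) (n : ℤ) :
    ∑ x ∈ liouvilleSet n with 2 * x.1 + x.2.1 < x.2.2, f x.1 x.2.1 x.2.2 = 0 := by
  refine sum_involution (fun x _ => (-(x.1 + x.2.1), x.2.1, x.2.2 - 2 * x.1 - x.2.1)) ?_ ?_ ?_ ?_
  · rintro ⟨i, d, e⟩ -
    rw [hreflect, add_neg_cancel]
  · rintro ⟨i, d, e⟩ - hf hfixed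
    simp only [Prod.mk.injEq] at hfixed
    refine hf (self_eq_neg.1 ?_)
    rw [← hreflect, hfixed.1, hfixed.2.2]
  · rintro ⟨i, d, e⟩ hx
    simp only [mem_filter, mem_liouvilleSet] at hx ⊢
    obtain ⟨⟨hd, he, h⟩, hlt⟩ := hx
    exact ⟨⟨hd, by omega, by rw [← h]; ring⟩, by omega⟩
  · rintro ⟨i, d, e⟩ -
    simp only [Prod.mk.injEq, true_and]
    constructor <;> ring

theorem sum_liouvilleSet_eq_sum_diagonal (hswap : ∀ i d e, f (-i) e d = f i d e)
    (hreflect : ∀ i d e, f (-(i + d)) d (e - 2 * i - d) = -f i d e) (n : ℤ) :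
    ∑ x ∈ liouvilleSet n, f x.1 x.2.1 x.2.2 =
      ∑ x ∈ liouvilleSet n with x.2.2 = 2 * x.1 + x.2.1, f x.1 x.2.1 x.2.2 := by
  have hlt := sum_liouvilleSet_filter_lt_eq_zero hreflect n
  have hgt : ∑ x ∈ liouvilleSet n with x.2.2 < 2 * x.1 + x.2.1, f x.1 x.2.1 x.2.2 = 0 := by
    let g i d e := if e < 2 * i + d then f i d e else 0
    calc _ = ∑ x ∈ liouvilleSet n, g x.1 x.2.1 x.2.2 := sum_filter ..
      _ = ∑ x ∈ liouvilleSet n, g (-x.1) x.2.2 x.2.1 := by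
        rw [← sum_liouvilleSet_swap g, ← sum_liouvilleSet_neg fun i d e => g i e d]
      _ = ∑ x ∈ liouvilleSet n with 2 * x.1 + x.2.1 < x.2.2, f x.1 x.2.1 x.2.2 := by
        rw [sum_filter]
        refine sum_congr rfl fun x _ => ?_
        have : x.2.1 < 2 * -x.1 + x.2.2 ↔ 2 * x.1 + x.2.1 < x.2.2 := by omega
        simp only [g, hswap, this]
      _ = 0 := hlt
  calc ∑ x ∈ liouvilleSet n, f x.1 x.2.1 x.2.2
      = ∑ x ∈ liouvilleSet n with x.2.2 = 2 * x.1 + x.2.1, f x.1 x.2.1 x.2.2 +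
          (∑ x ∈ liouvilleSet n with x.2.2 < 2 * x.1 + x.2.1, f x.1 x.2.1 x.2.2 +
            ∑ x ∈ liouvilleSet n with 2 * x.1 + x.2.1 < x.2.2, f x.1 x.2.1 x.2.2) := by
        simp only [sum_filter, ← sum_add_distrib]
        refine sum_congr rfl fun x _ => ?_
        rcases lt_trichotomy x.2.2 (2 * x.1 + x.2.1) with h | h | h
        · simp [h, h.ne, h.not_gt]
        · simp [h]
        · simp [h, h.ne', h.not_gt]
    _ = _ := by rw [hlt, hgt, add_zero, add_zero]

end Reflection

/-- The sign in Liouville's identity for sums of four squares: `-1` if `d` and `e` are both even,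
and `1` otherwise. -/
def evenSign (d e : ℤ) : ℤ := if Even d ∧ Even e then -1 else 1

theorem evenSign_comm (d e : ℤ) : evenSign d e = evenSign e d := by
  simp only [evenSign, and_comm]

theorem evenSign_congr {d e e' : ℤ} (h : Even d → (Even e ↔ Even e')) :
    evenSign d e = evenSign d e' := by
  simp only [evenSign, and_congr_right h]

theorem evenSign_two_mul_sub (k d : ℕ) : evenSign d (2 * k - d) = (-1) ^ (d + 1) := by
  rcases Nat.even_or_odd d with hd | hd <;> simp [evenSign, Int.even_sub, hd, pow_succ]

theorem sum_alternating_mul_sub {R : Type*} [CommRing R] (k : ℕ) (c : R) :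
    ∑ d ∈ range (2 * k), (-1) ^ (d + 1) * (d * (c - d)) = k * (c + 1 - 2 * k) := by
  induction k with
  | zero => simp
  | succ k ih =>
    rw [mul_add_one, sum_range_succ, sum_range_succ, ih]
    simp only [pow_succ, pow_mul]
    push_cast
    ring_nf

/-- The weight to which `sum_liouvilleSet_eq_sum_diagonal` is applied: it is symmetric and odd under
the reflection, and its average over `i` and `-i` is `evenSign d e * ((d + e) * (n - 5 * i ^ 2))`
where `i ^ 2 + d * e = n`. -/
def liouvilleWeight (i d e : ℤ) : ℤ := evenSign d e * ((d + e) * (d + 2 * i) * (e - 2 * i))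

theorem liouvilleWeight_neg_swap (i d e : ℤ) :
    liouvilleWeight (-i) e d = liouvilleWeight i d e := by
  rw [liouvilleWeight, liouvilleWeight, evenSign_comm]
  ring

theorem liouvilleWeight_reflect (i d e : ℤ) :
    liouvilleWeight (-(i + d)) d (e - 2 * i - d) = -liouvilleWeight i d e := by
  have : evenSign d (e - 2 * i - d) = evenSign d e :=
    evenSign_congr fun hd => by simp [Int.even_sub, hd]
  rw [liouvilleWeight, liouvilleWeight, this]
  ring

theorem sum_liouvilleWeight_diagonal_sq (k : ℕ) :
    ∑ x ∈ liouvilleSet (k ^ 2) with x.2.2 = 2 * x.1 + x.2.1, liouvilleWeight x.1 x.2.1 x.2.2 =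
      2 * (k : ℤ) ^ 2 := by
  calc _ = ∑ d ∈ Ioo 0 (2 * k), 2 * (k : ℤ) * ((-1) ^ (d + 1) * (d * (2 * k - d))) := by
        rw [sum_diagonal_liouvilleSet_sq]
        refine sum_congr rfl fun d _ => ?_
        rw [liouvilleWeight, evenSign_two_mul_sub]
        ring
    _ = 2 * k * ∑ d ∈ range (2 * k), (-1 : ℤ) ^ (d + 1) * (d * (2 * k - d)) := by
        rw [← mul_sum]
        congr 1
        refine sum_subset (fun d hd => mem_range.2 (mem_Ioo.1 hd).2) fun d hd hd' => ?_
        obtain rfl : d = 0 := by simp at hd hd'; omega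
        simp
    _ = 2 * (k : ℤ) ^ 2 := by
        rw [sum_alternating_mul_sub]
        ring

theorem sum_liouvilleWeight_eq (n : ℤ) :
    ∑ x ∈ liouvilleSet n, liouvilleWeight x.1 x.2.1 x.2.2 =
      2 * ∑ x ∈ liouvilleSet n, evenSign x.2.1 x.2.2 * (x.2.1 * (n - 5 * x.1 ^ 2)) := by
  have hswap := sum_liouvilleSet_swap (fun i d e => evenSign d e * (d * (n - 5 * i ^ 2))) n
  have hneg := sum_liouvilleSet_neg liouvilleWeight n
  have havg : ∑ x ∈ liouvilleSet n, liouvilleWeight x.1 x.2.1 x.2.2 +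
      ∑ x ∈ liouvilleSet n, liouvilleWeight (-x.1) x.2.1 x.2.2 =
      2 * (∑ x ∈ liouvilleSet n, evenSign x.2.1 x.2.2 * (x.2.1 * (n - 5 * x.1 ^ 2)) +
        ∑ x ∈ liouvilleSet n, evenSign x.2.2 x.2.1 * (x.2.2 * (n - 5 * x.1 ^ 2))) := by
    rw [← sum_add_distrib, ← sum_add_distrib, mul_sum]
    refine sum_congr rfl ?_
    rintro ⟨i, d, e⟩ hx
    obtain ⟨-, -, rfl⟩ := mem_liouvilleSet.1 hx
    simp only [liouvilleWeight, evenSign_comm e d]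
    ring
  linarith

theorem sum_liouvilleSet_evenSign_mul (n : ℤ) :
    ∑ x ∈ liouvilleSet n, evenSign x.2.1 x.2.2 * (x.2.1 * (n - 5 * x.1 ^ 2)) =
      if IsSquare n then n else 0 := by
  have h := (sum_liouvilleWeight_eq n).symm.trans
    (sum_liouvilleSet_eq_sum_diagonal liouvilleWeight_neg_swap liouvilleWeight_reflect n)
  split_ifs with hn
  · obtain ⟨k, rfl⟩ : ∃ k : ℕ, n = k ^ 2 := hn.elim fun r hr => ⟨r.natAbs, by simp [hr, sq]⟩
    rw [sum_liouvilleWeight_diagonal_sq] at h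
    linarith
  · rw [diagonal_liouvilleSet_eq_empty hn, sum_empty] at h
    linarith

end Liouville

section FourSquares

open Finset

/-- The arithmetic function `d ↦ d` restricted to the integers not divisible by `4`. -/
def idNotFourDvd : ArithmeticFunction ℕ := ⟨fun d => if 4 ∣ d then 0 else d, by simp⟩

theorem idNotFourDvd_apply (d : ℕ) : idNotFourDvd d = if 4 ∣ d then 0 else d := rfl

theorem isMultiplicative_idNotFourDvd : idNotFourDvd.IsMultiplicative := by
  refine ⟨by simp [idNotFourDvd_apply], fun {m n} hmn => ?_⟩
  have : 4 ∣ m * n ↔ 4 ∣ m ∨ 4 ∣ n :=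
    hmn.isPrimePow_dvd_mul ((isPrimePow_iff_pow_succ _).2 ⟨2, 1, Nat.prime_two.prime, rfl⟩)
  by_cases hm : 4 ∣ m <;> by_cases hn : 4 ∣ n <;> simp [idNotFourDvd_apply, this, hm, hn]

/-- The function `n ↦ ∑_{d ∣ n, 4 ∤ d} d` of Jacobi's four-square theorem, written as a Dirichlet
product to make its multiplicativity apparent. -/
def jacobiSigma : ArithmeticFunction ℕ := idNotFourDvd * ArithmeticFunction.zeta

theorem jacobiSigma_apply (n : ℕ) :
    jacobiSigma n = ∑ d ∈ n.divisors, if 4 ∣ d then 0 else d := by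
  rw [jacobiSigma, ArithmeticFunction.mul_zeta_apply]
  rfl

theorem isMultiplicative_jacobiSigma : jacobiSigma.IsMultiplicative :=
  isMultiplicative_idNotFourDvd.mul ArithmeticFunction.isMultiplicative_zeta

-- Moving a factor `2` between the entries turns the pairs `(d, e)` of even integers with `d e = n`
-- into those with `4 ∣ d`.
theorem two_mul_sum_divisorsAntidiagonal_even (n : ℕ) :
    2 * ∑ p ∈ n.divisorsAntidiagonal with Even p.1 ∧ Even p.2, p.1 =
      ∑ d ∈ n.divisors with 4 ∣ d, d := by
  rw [mul_sum]
  refine sum_bij' (fun p _ => 2 * p.1) (fun d _ => (d / 2, 2 * (n / d))) ?_ ?_ ?_ ?_ ?_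
  · rintro ⟨d, e⟩ hp
    simp only [mem_filter, Nat.mem_divisorsAntidiagonal, Nat.mem_divisors] at hp ⊢
    obtain ⟨⟨rfl, h0⟩, hd, he⟩ := hp
    obtain ⟨e, rfl⟩ := he.two_dvd
    exact ⟨⟨⟨e, by ring⟩, h0⟩, mul_dvd_mul_left 2 hd.two_dvd⟩
  · intro d hd
    simp only [mem_filter, Nat.mem_divisorsAntidiagonal, Nat.mem_divisors] at hd ⊢
    obtain ⟨⟨hdn, h0⟩, c, rfl⟩ := hd
    refine ⟨⟨?_, h0⟩, ⟨c, by omega⟩, even_two_mul _⟩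
    rw [show 4 * c / 2 = 2 * c by omega]
    nth_rw 2 [← Nat.mul_div_cancel' hdn]
    ring
  · rintro ⟨d, e⟩ hp
    simp only [mem_filter, Nat.mem_divisorsAntidiagonal] at hp
    obtain ⟨⟨rfl, h0⟩, -, he⟩ := hp
    obtain ⟨e, rfl⟩ := he.two_dvd
    have hd : 0 < 2 * d := by
      have := left_ne_zero_of_mul h0
      omega
    rw [← mul_assoc, mul_comm d 2, Nat.mul_div_cancel_left e hd]
    simp
  · intro d hd
    exact Nat.mul_div_cancel' ((by decide : 2 ∣ 4).trans (mem_filter.1 hd).2)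
  · simp

theorem sum_divisorsAntidiagonal_evenSign_mul (n : ℕ) :
    ∑ p ∈ n.divisorsAntidiagonal, evenSign p.1 p.2 * p.1 = jacobiSigma n := by
  have hsplit : ∑ p ∈ n.divisorsAntidiagonal, evenSign p.1 p.2 * p.1 =
      ∑ p ∈ n.divisorsAntidiagonal, (p.1 : ℤ) -
        2 * ∑ p ∈ n.divisorsAntidiagonal with Even p.1 ∧ Even p.2, (p.1 : ℤ) := by
    rw [mul_sum, sum_filter, ← sum_sub_distrib]
    refine sum_congr rfl fun p _ => ?_
    simp only [evenSign, Int.even_coe_nat]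
    split_ifs <;> ring
  have heven : 2 * ∑ p ∈ n.divisorsAntidiagonal with Even p.1 ∧ Even p.2, (p.1 : ℤ) =
      ∑ d ∈ n.divisors with 4 ∣ d, (d : ℤ) := by
    simpa using congrArg (Nat.cast : ℕ → ℤ) (two_mul_sum_divisorsAntidiagonal_even n)
  rw [hsplit, heven, Nat.sum_divisorsAntidiagonal fun d _ => (d : ℤ), jacobiSigma_apply,
    sum_filter, ← sum_sub_distrib]
  push_cast
  refine sum_congr rfl fun d _ => ?_
  split_ifs <;> simp

theorem jacobiSigma_recurrence (n : ℤ) :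
    ∑ i ∈ Icc (-n) n, (n - 5 * i ^ 2) * jacobiSigma (n - i ^ 2).toNat =
      if IsSquare n then n else 0 := by
  rw [← sum_liouvilleSet_evenSign_mul, sum_liouvilleSet_eq_sum_divisorsAntidiagonal
    fun i d e => evenSign d e * (d * (n - 5 * i ^ 2))]
  refine sum_congr rfl fun i _ => ?_
  rw [← sum_divisorsAntidiagonal_evenSign_mul, mul_sum]
  exact sum_congr rfl fun p _ => by ring

/-- The integer vectors of length `k` with sum of squares `m`, so that `rk k m` is the cardinality
of `latticeSphere k m`. Allowing negative `m` gives meaning to `m - i ^ 2` without truncation. -/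
noncomputable def latticeSphere (k : ℕ) (m : ℤ) : Finset (Fin k → ℤ) :=
  {v ∈ Fintype.piFinset fun _ => Icc (-m) m | ∑ i, v i ^ 2 = m}

theorem mem_latticeSphere {k : ℕ} {m : ℤ} {v : Fin k → ℤ} :
    v ∈ latticeSphere k m ↔ ∑ i, v i ^ 2 = m := by
  simp only [latticeSphere, mem_filter, Fintype.mem_piFinset, mem_Icc, and_iff_right_iff_imp]
  rintro rfl i
  have habs : |v i| ≤ v i ^ 2 := Int.natCast_natAbs (v i) ▸ Int.natAbs_le_self_sq (v i)
  exact abs_le.1 (habs.trans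
    (single_le_sum (f := fun i => v i ^ 2) (fun i _ => sq_nonneg (v i)) (mem_univ i)))

theorem rk_eq_card_latticeSphere (k m : ℕ) : rk k m = #(latticeSphere k m) := by
  rw [rk, ← Nat.card_eq_finsetCard]
  exact Nat.card_congr (Equiv.subtypeEquivRight fun _ => mem_latticeSphere.symm)

theorem latticeSphere_of_neg (k : ℕ) {m : ℤ} (hm : m < 0) : latticeSphere k m = ∅ := by
  refine eq_empty_of_forall_notMem fun v hv => hm.not_ge ?_
  rw [← mem_latticeSphere.1 hv]
  positivity

theorem latticeSphere_zero (k : ℕ) : latticeSphere k 0 = {0} := by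
  ext v
  rw [mem_latticeSphere, sum_eq_zero_iff_of_nonneg fun i _ => sq_nonneg (v i)]
  simp [funext_iff]

theorem card_latticeSphere_filter (k : ℕ) (n i : ℤ) :
    #{v ∈ latticeSphere (k + 1) n | v 0 = i} = #(latticeSphere k (n - i ^ 2)) := by
  refine card_nbij' Fin.tail (fun w => Fin.cons i w) ?_ ?_ ?_ ?_
  · rintro v hv
    simp only [coe_filter, Set.mem_ofPred_eq, mem_latticeSphere, Fin.sum_univ_succ] at hv
    obtain ⟨rfl, rfl⟩ := hv
    simp [mem_latticeSphere, Fin.tail]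
  · intro w hw
    simp_all [mem_latticeSphere, Fin.sum_univ_succ]
  · intro v hv
    obtain rfl := (mem_filter.1 (mem_coe.1 hv)).2
    exact Fin.cons_self_tail v
  · intro w _
    exact Fin.tail_cons (α := fun _ => ℤ) i w

theorem sum_latticeSphere_succ {M : Type*} [AddCommMonoid M] (k : ℕ) (n : ℤ) (g : ℤ → M) :
    ∑ v ∈ latticeSphere (k + 1) n, g (v 0) =
      ∑ i ∈ Icc (-n) n, #(latticeSphere k (n - i ^ 2)) • g i := by
  have hmaps : ∀ v ∈ latticeSphere (k + 1) n, v 0 ∈ Icc (-n) n := fun v hv =>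
    Fintype.mem_piFinset.1 (mem_filter.1 hv).1 0
  rw [← sum_fiberwise_of_maps_to' hmaps]
  simp only [sum_const, card_latticeSphere_filter]

theorem sum_latticeSphere_apply_sq (k : ℕ) (n : ℤ) (i j : Fin k) :
    ∑ v ∈ latticeSphere k n, v i ^ 2 = ∑ v ∈ latticeSphere k n, v j ^ 2 := by
  have hperm : ∀ v ∈ latticeSphere k n, v ∘ Equiv.swap i j ∈ latticeSphere k n := fun v hv =>
    mem_latticeSphere.2 <|
      (Equiv.sum_comp (Equiv.swap i j) fun l => v l ^ 2).trans (mem_latticeSphere.1 hv)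
  refine sum_nbij' (· ∘ Equiv.swap i j) (· ∘ Equiv.swap i j) hperm hperm ?_ ?_ ?_ <;>
    intro v _
  · ext; simp
  · ext; simp
  · simp

theorem mul_sum_latticeSphere_apply_sq (k : ℕ) (n : ℤ) (i : Fin k) :
    k * ∑ v ∈ latticeSphere k n, v i ^ 2 = ∑ _v ∈ latticeSphere k n, n := by
  calc k * ∑ v ∈ latticeSphere k n, v i ^ 2
      = ∑ j : Fin k, ∑ v ∈ latticeSphere k n, v j ^ 2 := by
        simp [← sum_latticeSphere_apply_sq k n i]
    _ = ∑ v ∈ latticeSphere k n, ∑ j : Fin k, v j ^ 2 := sum_comm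
    _ = ∑ _v ∈ latticeSphere k n, n := sum_congr rfl fun _ hv => mem_latticeSphere.1 hv

theorem card_latticeSphere_recurrence (k : ℕ) (n : ℤ) :
    ∑ i ∈ Icc (-n) n, (n - (k + 1) * i ^ 2) * (#(latticeSphere k (n - i ^ 2)) : ℤ) = 0 := by
  calc _ = ∑ v ∈ latticeSphere (k + 1) n, (n - (k + 1) * v 0 ^ 2) := by
        rw [sum_latticeSphere_succ k n fun i => n - (k + 1) * i ^ 2]
        exact sum_congr rfl fun i _ => by rw [nsmul_eq_mul, mul_comm]
    _ = 0 := by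
        rw [sum_sub_distrib, ← mul_sum, ← mul_sum_latticeSphere_apply_sq (k + 1) n 0]
        push_cast
        ring

theorem sum_ite_sub_sq_eq_zero {n : ℤ} (hn : 0 < n) :
    ∑ i ∈ Icc (-n) n, (n - 5 * i ^ 2) * (if n - i ^ 2 = 0 then 1 else 0) =
      if IsSquare n then -8 * n else 0 := by
  simp only [mul_ite, mul_one, mul_zero, ← sum_filter, sub_eq_zero]
  split_ifs with h
  · obtain ⟨k, rfl⟩ := h
    have hk : k ≠ 0 := by rintro rfl; simp at hn
    have hroots : {i ∈ Icc (-(k * k)) (k * k) | k * k = i ^ 2} = {k, -k} := by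
      ext i
      simp only [mem_filter, mem_Icc, mem_insert, mem_singleton, ← sq_eq_sq_iff_eq_or_eq_neg, ← sq,
        eq_comm (a := k ^ 2), and_iff_right_iff_imp]
      intro hi
      rw [← hi]
      exact abs_le.1 (Int.natCast_natAbs i ▸ Int.natAbs_le_self_sq i)
    rw [hroots, sum_pair (by omega)]
    ring
  · rw [sum_eq_zero]
    intro i hi
    exact absurd ⟨i, (mem_filter.1 hi).2.trans (sq i)⟩ h

-- In the recurrence at `n` the term `i = 0` is `n * a n`, and the others involve only values of `a`
-- below `n`.
theorem eq_of_sum_mul_apply_sub_sq_eq {R : Type*} [Ring R] [NoZeroDivisors R] [CharZero R]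
    {a b : ℤ → R} (c : R) (hneg : ∀ n : ℤ, n < 0 → a n = b n) (h0 : a 0 = b 0)
    (hrec : ∀ n : ℤ, 0 < n → ∑ i ∈ Icc (-n) n, (n - c * (i : R) ^ 2) * a (n - i ^ 2) =
      ∑ i ∈ Icc (-n) n, (n - c * (i : R) ^ 2) * b (n - i ^ 2)) : a = b := by
  have hnat (n : ℕ) : a n = b n := by
    induction n using Nat.strong_induction_on with
    | _ n ih =>
      rcases n.eq_zero_or_pos with rfl | hn
      · exact h0
      have hlower (i : ℤ) (hi : i ≠ 0) : a (n - i ^ 2) = b (n - i ^ 2) := by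
        have hi2 : 0 < i ^ 2 := by positivity
        rcases lt_or_ge ((n : ℤ) - i ^ 2) 0 with hlt | hge
        · exact hneg _ hlt
        · lift (n : ℤ) - i ^ 2 to ℕ using hge with m hm
          exact ih m (by omega)
      have hmem : (0 : ℤ) ∈ Icc (-(n : ℤ)) n := by simp
      have h := hrec n (by exact_mod_cast hn)
      rw [← add_sum_erase _ _ hmem, ← add_sum_erase _ _ hmem,
        sum_congr rfl fun i hi => by rw [hlower i (ne_of_mem_erase hi)], add_left_inj] at h
      simpa [hn.ne'] using h
  ext n
  rcases lt_or_ge n 0 with hn | hn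
  · exact hneg n hn
  · lift n to ℕ using hn
    exact hnat n

theorem card_latticeSphere_four (n : ℤ) :
    (#(latticeSphere 4 n) : ℤ) = 8 * jacobiSigma n.toNat + if n = 0 then 1 else 0 := by
  refine congrFun (eq_of_sum_mul_apply_sub_sq_eq (a := fun m => (#(latticeSphere 4 m) : ℤ))
    (b := fun m => 8 * jacobiSigma m.toNat + if m = 0 then 1 else 0) 5
    (fun m hm => ?_) ?_ fun m hm => ?_) n
  · simp [latticeSphere_of_neg 4 hm, Int.toNat_of_nonpos hm.le, hm.ne]
  · simp [latticeSphere_zero]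
  · have hsphere := card_latticeSphere_recurrence 4 m
    norm_num at hsphere
    simp only [Int.cast_id, hsphere, mul_add, sum_add_distrib, mul_left_comm _ (8 : ℤ), ← mul_sum,
      jacobiSigma_recurrence, sum_ite_sub_sq_eq_zero hm]
    split_ifs <;> ring

theorem rk_four_eq {n : ℕ} (hn : n ≠ 0) : rk 4 n = 8 * jacobiSigma n := by
  have h := card_latticeSphere_four n
  rw [← rk_eq_card_latticeSphere, Int.toNat_natCast, if_neg (by exact_mod_cast hn), add_zero] at h
  exact_mod_cast h

end FourSquares

section LinearRecurrence

variable {K : Type*} [NormedField K]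

theorem one_sub_ne_zero_of_norm_lt_one {x : K} (hx : ‖x‖ < 1) : 1 - x ≠ 0 :=
  sub_ne_zero.2 fun h => by simp [← h] at hx

theorem summable_norm_of_succ_eq_mul_add {u v : ℕ → K} {c : K} (hc : ‖c‖ < 1)
    (hv : Summable fun e => ‖v e‖) (hu : ∀ e, u (e + 1) = c * u e + v e) :
    Summable fun e => ‖u e‖ := by
  refine summable_of_sum_range_le (c := (‖u 0‖ + ∑' e, ‖v e‖) / (1 - ‖c‖))
    (fun e => norm_nonneg (u e)) fun N => ?_
  have hstep : ∑ e ∈ Finset.range N, ‖u (e + 1)‖ ≤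
      ‖c‖ * ∑ e ∈ Finset.range N, ‖u e‖ + ∑' e, ‖v e‖ :=
    calc _ ≤ ∑ e ∈ Finset.range N, (‖c‖ * ‖u e‖ + ‖v e‖) := by
          gcongr with e
          rw [hu, ← norm_mul]
          exact norm_add_le _ _
      _ ≤ _ := by
          rw [Finset.sum_add_distrib, ← Finset.mul_sum]
          gcongr
          exact hv.sum_le_tsum _ fun e _ => norm_nonneg (v e)
  have hshift : ∑ e ∈ Finset.range N, ‖u e‖ ≤ ∑ e ∈ Finset.range N, ‖u (e + 1)‖ + ‖u 0‖ := by
    rw [← Finset.sum_range_succ' (fun e => ‖u e‖), Finset.sum_range_succ]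
    exact le_add_of_nonneg_right (norm_nonneg _)
  rw [le_div_iff₀ (sub_pos.2 hc)]
  linarith

theorem tsum_of_succ_eq_mul_add [CompleteSpace K] {u v : ℕ → K} {c : K} (hc : ‖c‖ < 1)
    (hv : Summable fun e => ‖v e‖) (hu : ∀ e, u (e + 1) = c * u e + v e) :
    ∑' e, u e = (u 0 + ∑' e, v e) / (1 - c) := by
  have hsum : Summable u := (summable_norm_of_succ_eq_mul_add hc hv hu).of_norm
  have h := hsum.tsum_eq_zero_add
  simp only [hu] at h
  rw [(hsum.mul_left c).tsum_add hv.of_norm, tsum_mul_left] at h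
  rw [eq_div_iff (one_sub_ne_zero_of_norm_lt_one hc)]
  linear_combination h

theorem geom_sum_succ_mul_pow_succ (a x : K) (e : ℕ) :
    (∑ j ∈ Finset.range (e + 1 + 1), a ^ j) * x ^ (e + 1) =
      a * x * ((∑ j ∈ Finset.range (e + 1), a ^ j) * x ^ e) + x * x ^ e := by
  rw [geom_sum_succ]
  ring

variable {a b x : K}

theorem summable_norm_geom_sum_mul_pow (hx : ‖x‖ < 1) (hax : ‖a * x‖ < 1) :
    Summable fun e => ‖(∑ j ∈ Finset.range (e + 1), a ^ j) * x ^ e‖ :=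
  summable_norm_of_succ_eq_mul_add hax
    (by simpa only [norm_mul] using (summable_norm_geometric_of_norm_lt_one hx).mul_left ‖x‖)
    (geom_sum_succ_mul_pow_succ a x)

variable [CompleteSpace K]

theorem tsum_geom_sum_mul_pow (hx : ‖x‖ < 1) (hax : ‖a * x‖ < 1) :
    ∑' e, (∑ j ∈ Finset.range (e + 1), a ^ j) * x ^ e = 1 / ((1 - x) * (1 - a * x)) := by
  have hv : Summable fun e => ‖x * x ^ e‖ := by
    simpa only [norm_mul] using (summable_norm_geometric_of_norm_lt_one hx).mul_left ‖x‖
  rw [tsum_of_succ_eq_mul_add hax hv (geom_sum_succ_mul_pow_succ a x), tsum_mul_left,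
    tsum_geometric_of_norm_lt_one hx]
  have := one_sub_ne_zero_of_norm_lt_one hx
  simp only [zero_add, Finset.sum_range_one, pow_zero, mul_one]
  field

theorem tsum_geom_sum_mul_geom_sum_mul_pow (hx : ‖x‖ < 1) (hax : ‖a * x‖ < 1)
    (hbx : ‖b * x‖ < 1) (habx : ‖a * b * x‖ < 1) :
    ∑' e, (∑ j ∈ Finset.range (e + 1), a ^ j) * (∑ j ∈ Finset.range (e + 1), b ^ j) * x ^ e =
      (1 - a * b * x ^ 2) / ((1 - x) * (1 - a * x) * (1 - b * x) * (1 - a * b * x)) := by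
  have h0 := summable_norm_geometric_of_norm_lt_one hx
  have ha := summable_norm_geom_sum_mul_pow hx hax
  have hb := summable_norm_geom_sum_mul_pow hx hbx
  let v e := x * (x ^ e + (a * ((∑ j ∈ Finset.range (e + 1), a ^ j) * x ^ e) +
    b * ((∑ j ∈ Finset.range (e + 1), b ^ j) * x ^ e)))
  have hv : Summable fun e => ‖v e‖ := by
    refine .of_nonneg_of_le (fun e => norm_nonneg (v e)) (fun e => ?_)
      ((h0.add ((ha.mul_left ‖a‖).add (hb.mul_left ‖b‖))).mul_left ‖x‖)
    simp only [v, norm_mul x, ← norm_mul a, ← norm_mul b]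
    gcongr
    exact (norm_add_le _ _).trans (add_le_add_right (norm_add_le _ _) _)
  have hv_tsum : ∑' e, v e =
      x * (1 / (1 - x) + (a / ((1 - x) * (1 - a * x)) + b / ((1 - x) * (1 - b * x)))) := by
    rw [tsum_mul_left, h0.of_norm.tsum_add ((ha.of_norm.mul_left a).add (hb.of_norm.mul_left b)),
      (ha.of_norm.mul_left a).tsum_add (hb.of_norm.mul_left b), tsum_mul_left, tsum_mul_left,
      tsum_geometric_of_norm_lt_one hx, tsum_geom_sum_mul_pow hx hax, tsum_geom_sum_mul_pow hx hbx]
    ring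
  rw [tsum_of_succ_eq_mul_add habx hv fun e => ?_, hv_tsum]
  · have := one_sub_ne_zero_of_norm_lt_one hx
    have := mul_comm a x ▸ one_sub_ne_zero_of_norm_lt_one hax
    have := mul_comm b x ▸ one_sub_ne_zero_of_norm_lt_one hbx
    simp only [zero_add, Finset.sum_range_one, pow_zero, mul_one]
    field
  · simp only [v]
    rw [geom_sum_succ, geom_sum_succ (x := b)]
    ring

end LinearRecurrence

section EulerProducts

theorem cpow_natCast_sub_natCast_mul {x : ℂ} (hx : x ≠ 0) (k j : ℕ) (s : ℂ) :
    x ^ (k - j * s) = x ^ k * (x ^ (-s)) ^ j := by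
  rw [sub_eq_add_neg, cpow_add _ _ hx, cpow_natCast, ← cpow_nat_mul, mul_neg]

theorem cpow_neg_sub_natCast {x : ℂ} (hx : x ≠ 0) (s : ℂ) (k : ℕ) :
    x ^ (-(s - k)) = x ^ k * x ^ (-s) := by
  simpa using cpow_natCast_sub_natCast_mul hx k 1 s

theorem LSeriesSummable_of_norm_le {f g : ℕ → ℂ} {s : ℂ} (h : ∀ n, ‖f n‖ ≤ ‖g n‖)
    (hg : LSeriesSummable g s) : LSeriesSummable f s :=
  hg.norm.of_norm_bounded fun n => LSeries.norm_term_le s (h n)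

theorem LSeriesSummable_pow_mul_iff (f : ℕ → ℂ) (s : ℂ) (k : ℕ) :
    LSeriesSummable (fun n => (n : ℂ) ^ k * f n) s ↔ LSeriesSummable f (s - k) := by
  refine summable_congr fun n => ?_
  rcases eq_or_ne n 0 with rfl | hn
  · simp
  rw [LSeries.term_of_ne_zero hn, LSeries.term_of_ne_zero hn, div_eq_mul_inv, div_eq_mul_inv,
    ← cpow_neg, ← cpow_neg, cpow_neg_sub_natCast (Nat.cast_ne_zero.2 hn)]
  ring

theorem hasSum_LSeries_succ {f : ℕ → ℂ} {s : ℂ} (hf : LSeriesSummable f s) :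
    HasSum (fun m : ℕ => f (m + 1) / ((m : ℂ) + 1) ^ s) (LSeries f s) := by
  have h := (hasSum_nat_add_iff' 1).2 hf.LSeriesHasSum
  simpa [LSeries.term_of_ne_zero (Nat.succ_ne_zero _)] using h

variable {f g : ArithmeticFunction ℂ} {s : ℂ}

theorem hasProd_LSeries (hf : f.IsMultiplicative) (hs : LSeriesSummable f s) :
    HasProd (fun p : Nat.Primes => ∑' e, f (p ^ e) * ((p : ℂ) ^ (-s)) ^ e) (LSeries f s) := by
  have hterm : LSeries.term f s = fun n => f n * (n : ℂ) ^ (-s) :=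
    funext (LSeries.term_def₀ f.map_zero s)
  have hmul {m n : ℕ} (hmn : m.Coprime n) :
      LSeries.term f s (m * n) = LSeries.term f s m * LSeries.term f s n := by
    simp only [hterm, hf.2 hmn, Nat.cast_mul, natCast_mul_natCast_cpow]
    ring
  have hpow (p : Nat.Primes) (e : ℕ) :
      LSeries.term f s (p ^ e) = f (p ^ e) * ((p : ℂ) ^ (-s)) ^ e := by
    simp only [hterm, Nat.cast_pow]
    rw [← natCast_cpow_natCast_mul, mul_comm (e : ℂ), cpow_mul_nat]
  have h1 : LSeries.term f s 1 = 1 := by simp [hf.1]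
  simpa only [hpow] using! EulerProduct.eulerProduct_hasProd h1 hmul hs.norm (LSeries.term_zero f s)

theorem LSeries_mul_eulerFactor_eq (hf : f.IsMultiplicative) (hg : g.IsMultiplicative)
    (hfs : LSeriesSummable f s) (hgs : LSeriesSummable g s) (q : Nat.Primes)
    (hfg : ∀ p : Nat.Primes, p ≠ q → ∀ e : ℕ, f (p ^ e) = g (p ^ e)) :
    LSeries f s * ∑' e, g (q ^ e) * ((q : ℂ) ^ (-s)) ^ e =
      LSeries g s * ∑' e, f (q ^ e) * ((q : ℂ) ^ (-s)) ^ e := by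
  refine ((hasProd_LSeries hf hfs).mul (hasProd_ite_eq q _)).unique ?_
  convert (hasProd_LSeries hg hgs).mul (hasProd_ite_eq q _) using 2 with p
  split_ifs with h
  · rw [h, mul_comm]
  · simp only [hfg p h]

end EulerProducts

section Ramanujan

open ArithmeticFunction
open scoped ArithmeticFunction.sigma ArithmeticFunction.zeta

theorem sigma_mul_le (k m n : ℕ) : σ k (m * n) ≤ σ k m * σ k n := by
  simp only [sigma_apply, Nat.divisors_mul, Finset.sum_mul_sum, ← Finset.sum_product', ← mul_pow]
  exact Finset.sum_image_le_of_nonneg fun _ _ => Nat.zero_le _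

theorem sigma_mul_sigma_le (a b n : ℕ) :
    σ a n * σ b n ≤ (σ a * (pow b).pmul (σ a)) n := by
  rw [← zeta_mul_pow_eq_sigma (k := b), mul_apply, mul_apply, Finset.mul_sum]
  refine Finset.sum_le_sum fun p hp => ?_
  obtain ⟨rfl, h0⟩ := Nat.mem_divisorsAntidiagonal.1 hp
  rw [zeta_apply_ne (left_ne_zero_of_mul h0), one_mul, pmul_apply, mul_left_comm, mul_comm]
  exact Nat.mul_le_mul_left _ (sigma_mul_le a _ _)

theorem LSeriesSummable_sigma {k : ℕ} {s : ℂ} (hs : k + 1 < s.re) :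
    LSeriesSummable (fun n => (σ k n : ℂ)) s := by
  have hzeta : LSeriesSummable (fun n => (ζ n : ℂ)) s :=
    LSeriesSummable_zeta_iff.2 (by linarith)
  have hpow : LSeriesSummable (fun n => (pow k n : ℂ)) s := by
    rw [LSeriesSummable_congr (g := fun n => (n : ℂ) ^ k * 1) s
      (fun {n} hn => by simp [pow_apply, hn]), LSeriesSummable_pow_mul_iff]
    exact LSeriesSummable_one_iff.2 (by simpa using lt_sub_iff_add_lt'.2 hs)
  simp only [← zeta_mul_pow_eq_sigma]
  simpa only [← natCoe_apply, natCoe_mul] using!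
    LSeriesSummable_mul (f := ζ) (g := pow k) hzeta hpow

theorem LSeriesSummable_sigma_mul_sigma {a b : ℕ} {s : ℂ} (hs : a + b + 1 < s.re) :
    LSeriesSummable (fun n => (σ a n : ℂ) * σ b n) s := by
  have ha : LSeriesSummable (fun n => (σ a n : ℂ)) s :=
    LSeriesSummable_sigma (by linarith)
  have hb : LSeriesSummable (fun n => ((pow b).pmul (σ a) n : ℂ)) s := by
    rw [LSeriesSummable_congr (g := fun n => (n : ℂ) ^ b * σ a n) s
      (fun {n} hn => by simp [pow_apply, hn]), LSeriesSummable_pow_mul_iff]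
    exact LSeriesSummable_sigma (by simpa using by linarith)
  have hab := LSeriesSummable_mul (f := σ a) (g := (pow b).pmul (σ a)) ha hb
  refine LSeriesSummable_of_norm_le (fun n => ?_) hab
  rw [← natCoe_mul, natCoe_apply, ← Nat.cast_mul, norm_natCast, norm_natCast]
  exact_mod_cast sigma_mul_sigma_le a b n

theorem norm_prime_pow_mul_cpow_neg_lt_one (p : Nat.Primes) {k : ℕ} {s : ℂ} (hs : k < s.re) :
    ‖(p : ℂ) ^ k * (p : ℂ) ^ (-s)‖ < 1 := by
  rw [← cpow_neg_sub_natCast (Nat.cast_ne_zero.2 p.2.ne_zero), norm_natCast_cpow_of_pos p.2.pos]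
  exact Real.rpow_lt_one_of_one_lt_of_neg (mod_cast p.2.one_lt) (by simpa using hs)

theorem natCast_sigma_prime_pow {R : Type*} [CommSemiring R] {p : ℕ} (hp : p.Prime) (k e : ℕ) :
    (σ k (p ^ e) : R) = ∑ j ∈ Finset.range (e + 1), ((p : R) ^ k) ^ j := by
  simp [sigma_apply_prime_pow hp, ← pow_mul, mul_comm]

theorem tsum_sigma_mul_sigma_prime_pow (p : Nat.Primes) {a b : ℕ} {s : ℂ} (hs : a + b < s.re) :
    ∑' e, (σ a (p ^ e) : ℂ) * σ b (p ^ e) * ((p : ℂ) ^ (-s)) ^ e =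
      (1 - (p : ℂ) ^ a * (p : ℂ) ^ b * ((p : ℂ) ^ (-s)) ^ 2) /
        ((1 - (p : ℂ) ^ (-s)) * (1 - (p : ℂ) ^ a * (p : ℂ) ^ (-s)) *
          (1 - (p : ℂ) ^ b * (p : ℂ) ^ (-s)) *
          (1 - (p : ℂ) ^ a * (p : ℂ) ^ b * (p : ℂ) ^ (-s))) := by
  simp only [natCast_sigma_prime_pow p.2]
  apply tsum_geom_sum_mul_geom_sum_mul_pow
  · simpa using norm_prime_pow_mul_cpow_neg_lt_one p (k := 0) (s := s) (by push_cast; linarith)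
  · exact norm_prime_pow_mul_cpow_neg_lt_one p (by linarith)
  · exact norm_prime_pow_mul_cpow_neg_lt_one p (by linarith)
  · rw [← pow_add]
    exact norm_prime_pow_mul_cpow_neg_lt_one p (by exact_mod_cast hs)

theorem eulerFactor_sigma_mul_sigma (p : Nat.Primes) {a b : ℕ} {s : ℂ} (hs : a + b < s.re) :
    (∑' e, (σ a (p ^ e) : ℂ) * σ b (p ^ e) * ((p : ℂ) ^ (-s)) ^ e) *
        (1 - (p : ℂ) ^ (-(2 * s - a - b)))⁻¹ =
      (1 - (p : ℂ) ^ (-s))⁻¹ * (1 - (p : ℂ) ^ (-(s - a)))⁻¹ * (1 - (p : ℂ) ^ (-(s - b)))⁻¹ *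
        (1 - (p : ℂ) ^ (-(s - a - b)))⁻¹ := by
  have h2s : (p : ℂ) ^ (-(2 * s - a - b)) = (p : ℂ) ^ a * (p : ℂ) ^ b * ((p : ℂ) ^ (-s)) ^ 2 := by
    simp only [cpow_neg_sub_natCast (Nat.cast_ne_zero.2 p.2.ne_zero), ← cpow_mul_nat]
    push_cast
    ring_nf
  have hne : 1 - (p : ℂ) ^ (-(2 * s - a - b)) ≠ 0 := by
    have h := norm_prime_pow_mul_cpow_neg_lt_one p (k := 0) (s := 2 * s - a - b)
      (by simpa using by linarith)
    rw [pow_zero, one_mul] at h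
    exact one_sub_ne_zero_of_norm_lt_one h
  rw [tsum_sigma_mul_sigma_prime_pow p hs, ← h2s, div_mul_eq_mul_div, mul_inv_cancel₀ hne]
  simp only [cpow_neg_sub_natCast (Nat.cast_ne_zero.2 p.2.ne_zero), one_div, mul_inv, mul_assoc,
    mul_left_comm]

theorem LSeries_sigma_mul_sigma {a b : ℕ} {s : ℂ} (hs : a + b + 1 < s.re) :
    LSeries (fun n => (σ a n : ℂ) * σ b n) s * riemannZeta (2 * s - a - b) =
      riemannZeta s * riemannZeta (s - a) * riemannZeta (s - b) * riemannZeta (s - a - b) := by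
  have hsigma : HasProd (fun p : Nat.Primes =>
      ∑' e, (σ a (p ^ e) : ℂ) * σ b (p ^ e) * ((p : ℂ) ^ (-s)) ^ e)
      (LSeries (fun n => (σ a n : ℂ) * σ b n) s) :=
    hasProd_LSeries (f := (σ a : ArithmeticFunction ℂ).pmul (σ b))
      (isMultiplicative_sigma.natCast.pmul isMultiplicative_sigma.natCast)
      (LSeriesSummable_sigma_mul_sigma hs)
  have hprod := hsigma.mul
    (riemannZeta_eulerProduct_hasProd (s := 2 * s - a - b) (by simpa using by linarith))
  simp only [eulerFactor_sigma_mul_sigma _ ((lt_add_one _).trans hs)] at hprod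
  exact hprod.unique <|
    (((riemannZeta_eulerProduct_hasProd (by linarith)).mul
      (riemannZeta_eulerProduct_hasProd (by simpa using by linarith))).mul
      (riemannZeta_eulerProduct_hasProd (by simpa using by linarith))).mul
      (riemannZeta_eulerProduct_hasProd (by simpa using by linarith))

end Ramanujan

section JacobiSigmaLSeries

open scoped ArithmeticFunction.sigma

theorem jacobiSigma_le_sigma_one (n : ℕ) : jacobiSigma n ≤ σ 1 n := by
  rw [jacobiSigma_apply, ArithmeticFunction.sigma_one_apply]
  refine Finset.sum_le_sum fun d _ => ?_
  split_ifs <;> simp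

theorem jacobiSigma_prime_pow {p : ℕ} (hp : p.Prime) (h2 : p ≠ 2) (e : ℕ) :
    jacobiSigma (p ^ e) = σ 1 (p ^ e) := by
  rw [jacobiSigma_apply, ArithmeticFunction.sigma_one_apply]
  refine Finset.sum_congr rfl fun d hd => if_neg fun h4 => h2 ?_
  have h2p : 2 ∣ p ^ e := ((by norm_num : 2 ∣ 4).trans h4).trans (Nat.dvd_of_mem_divisors hd)
  exact ((Nat.prime_dvd_prime_iff_eq Nat.prime_two hp).1 (Nat.prime_two.dvd_of_dvd_pow h2p)).symm

theorem jacobiSigma_two_pow_succ (e : ℕ) : jacobiSigma (2 ^ (e + 1)) = 3 := by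
  rw [jacobiSigma_apply, Nat.sum_divisors_prime_pow Nat.prime_two]
  induction e with
  | zero => decide
  | succ e ih => rw [Finset.sum_range_succ, ih, if_pos ⟨2 ^ e, by ring⟩]

theorem tsum_jacobiSigma_mul_jacobiSigma_two_pow {K : Type*} [NormedField K] {x : K}
    (hx : ‖x‖ < 1) :
    ∑' e, (jacobiSigma (2 ^ e) : K) * jacobiSigma (2 ^ e) * x ^ e = (1 + 8 * x) / (1 - x) := by
  have h1 := one_sub_ne_zero_of_norm_lt_one hx
  refine ((hasSum_nat_add_iff' 1).1 ?_).tsum_eq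
  convert! (hasSum_geometric_of_norm_lt_one hx).mul_left (9 * x) using 1
  · ext e
    rw [jacobiSigma_two_pow_succ]
    push_cast
    ring
  · simp only [Finset.sum_range_one, pow_zero, isMultiplicative_jacobiSigma.1, Nat.cast_one]
    field

theorem LSeriesSummable_jacobiSigma_mul_jacobiSigma {s : ℂ} (hs : 3 < s.re) :
    LSeriesSummable (fun n => (jacobiSigma n : ℂ) * jacobiSigma n) s := by
  refine LSeriesSummable_of_norm_le (fun n => ?_)
    (LSeriesSummable_sigma_mul_sigma (a := 1) (b := 1) (by push_cast; linarith))
  simp only [← Nat.cast_mul, norm_natCast]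
  exact_mod_cast Nat.mul_le_mul (jacobiSigma_le_sigma_one n) (jacobiSigma_le_sigma_one n)

theorem norm_two_pow_mul_cpow_neg_lt_one {k : ℕ} {s : ℂ} (hs : k < s.re) :
    ‖(2 : ℂ) ^ k * 2 ^ (-s)‖ < 1 :=
  mod_cast norm_prime_pow_mul_cpow_neg_lt_one ⟨2, Nat.prime_two⟩ hs

theorem one_add_two_mul_two_cpow_neg_ne_zero {s : ℂ} (hs : 1 < s.re) :
    1 + 2 * (2 : ℂ) ^ (-s) ≠ 0 := by
  have h : ‖-(2 * (2 : ℂ) ^ (-s))‖ < 1 := by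
    simpa using norm_two_pow_mul_cpow_neg_lt_one (k := 1) (s := s) (by push_cast; linarith)
  simpa using one_sub_ne_zero_of_norm_lt_one h

theorem two_cpow_combination_eq (s : ℂ) :
    (2 : ℂ) ^ (6 - 3 * s) - 5 * (2 : ℂ) ^ (3 - 2 * s) + (2 : ℂ) ^ (1 - s) + 1 =
      (1 + 8 * 2 ^ (-s)) * (1 - 2 * 2 ^ (-s)) * (1 - 4 * 2 ^ (-s)) := by
  have h63 := cpow_natCast_sub_natCast_mul two_ne_zero 6 3 s
  have h32 := cpow_natCast_sub_natCast_mul two_ne_zero 3 2 s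
  have h11 := cpow_natCast_sub_natCast_mul two_ne_zero 1 1 s
  push_cast [one_mul] at h63 h32 h11
  rw [h63, h32, h11]
  ring

theorem tsum_sigma_one_mul_sigma_one_two_pow {s : ℂ} (hs : 2 < s.re) :
    ∑' e, (σ 1 (2 ^ e) : ℂ) * σ 1 (2 ^ e) * (2 ^ (-s)) ^ e =
      (1 + 2 * 2 ^ (-s)) / ((1 - 2 ^ (-s)) * (1 - 2 * 2 ^ (-s)) * (1 - 4 * 2 ^ (-s))) := by
  have h := tsum_sigma_mul_sigma_prime_pow ⟨2, Nat.prime_two⟩ (a := 1) (b := 1) (s := s)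
    (by push_cast; linarith)
  have h2 : 1 - 2 * (2 : ℂ) ^ (-s) ≠ 0 := one_sub_ne_zero_of_norm_lt_one <| by
    simpa using norm_two_pow_mul_cpow_neg_lt_one (k := 1) (s := s) (by push_cast; linarith)
  push_cast at h
  rw [h, pow_one, show 1 - 2 * 2 * ((2 : ℂ) ^ (-s)) ^ 2 =
    (1 + 2 * 2 ^ (-s)) * (1 - 2 * 2 ^ (-s)) by ring]
  field

theorem LSeries_jacobiSigma_mul_jacobiSigma_eq_LSeries_sigma {s : ℂ} (hs : 3 < s.re) :
    LSeries (fun n => (jacobiSigma n : ℂ) * jacobiSigma n) s * (1 + 2 * 2 ^ (-s)) =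
      LSeries (fun n => (σ 1 n : ℂ) * σ 1 n) s *
        ((1 + 8 * 2 ^ (-s)) * (1 - 2 * 2 ^ (-s)) * (1 - 4 * 2 ^ (-s))) := by
  have h0 : ‖(2 : ℂ) ^ (-s)‖ < 1 := by
    simpa using norm_two_pow_mul_cpow_neg_lt_one (k := 0) (s := s) (by push_cast; linarith)
  have h1 : 1 - 2 * (2 : ℂ) ^ (-s) ≠ 0 := one_sub_ne_zero_of_norm_lt_one <| by
    simpa using norm_two_pow_mul_cpow_neg_lt_one (k := 1) (s := s) (by push_cast; linarith)
  have h2 : 1 - 4 * (2 : ℂ) ^ (-s) ≠ 0 := one_sub_ne_zero_of_norm_lt_one <| by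
    rw [show (4 : ℂ) = 2 ^ 2 by norm_num]
    exact norm_two_pow_mul_cpow_neg_lt_one (by push_cast; linarith)
  have heq : LSeries (fun n => (jacobiSigma n : ℂ) * jacobiSigma n) s *
      ((1 + 2 * 2 ^ (-s)) / ((1 - 2 ^ (-s)) * (1 - 2 * 2 ^ (-s)) * (1 - 4 * 2 ^ (-s)))) =
      LSeries (fun n => (σ 1 n : ℂ) * σ 1 n) s * ((1 + 8 * 2 ^ (-s)) / (1 - 2 ^ (-s))) := by
    rw [← tsum_sigma_one_mul_sigma_one_two_pow (by linarith),
      ← tsum_jacobiSigma_mul_jacobiSigma_two_pow h0]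
    exact LSeries_mul_eulerFactor_eq
      (f := (jacobiSigma : ArithmeticFunction ℂ).pmul jacobiSigma)
      (g := (σ 1 : ArithmeticFunction ℂ).pmul (σ 1))
      (isMultiplicative_jacobiSigma.natCast.pmul isMultiplicative_jacobiSigma.natCast)
      (ArithmeticFunction.isMultiplicative_sigma.natCast.pmul
        ArithmeticFunction.isMultiplicative_sigma.natCast)
      (LSeriesSummable_jacobiSigma_mul_jacobiSigma hs)
      (LSeriesSummable_sigma_mul_sigma (by push_cast; linarith)) ⟨2, Nat.prime_two⟩
      fun p hp e => by simp [jacobiSigma_prime_pow p.2 (fun h => hp (Subtype.ext h))]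
  have h0' := one_sub_ne_zero_of_norm_lt_one h0
  rw [mul_div_assoc', mul_div_assoc', div_eq_div_iff (mul_ne_zero (mul_ne_zero h0' h1) h2) h0']
    at heq
  refine mul_right_cancel₀ h0' ?_
  linear_combination heq

theorem LSeries_jacobiSigma_mul_jacobiSigma {s : ℂ} (hs : 3 < s.re) :
    LSeries (fun n => (jacobiSigma n : ℂ) * jacobiSigma n) s *
        ((1 + 2 * 2 ^ (-s)) * riemannZeta (2 * s - 2)) =
      (1 + 8 * 2 ^ (-s)) * (1 - 2 * 2 ^ (-s)) * (1 - 4 * 2 ^ (-s)) *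
        (riemannZeta (s - 2) * riemannZeta (s - 1) ^ 2 * riemannZeta s) := by
  have hramanujan := LSeries_sigma_mul_sigma (a := 1) (b := 1) (s := s) (by push_cast; linarith)
  rw [Nat.cast_one, sub_sub, sub_sub, one_add_one_eq_two] at hramanujan
  linear_combination riemannZeta (2 * s - 2) *
    LSeries_jacobiSigma_mul_jacobiSigma_eq_LSeries_sigma hs +
    (1 + 8 * 2 ^ (-s)) * (1 - 2 * 2 ^ (-s)) * (1 - 4 * 2 ^ (-s)) * hramanujan

end JacobiSigmaLSeries

/-- explicit Euler-product evaluation of `∑ r_4(m)²/m^s`. -/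
theorem r4_squared_dirichlet_series (s : ℂ) (hs : 3 < s.re) :
    Summable (fun m : ℕ => ‖((rk 4 (m + 1) : ℂ)) ^ 2 / ((m : ℂ) + 1) ^ s‖) ∧
    (1 / 64 : ℂ) * (∑' m : ℕ, ((rk 4 (m + 1) : ℂ)) ^ 2 / ((m : ℂ) + 1) ^ s)
      = ((2 : ℂ) ^ (6 - 3 * s) - 5 * (2 : ℂ) ^ (3 - 2 * s) + (2 : ℂ) ^ (1 - s) + 1)
          * riemannZeta (s - 2) * riemannZeta (s - 1) ^ 2 * riemannZeta s
        / ((1 + (2 : ℂ) ^ (1 - s)) * riemannZeta (2 * s - 2)) := by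
  have hterm (m : ℕ) : (rk 4 (m + 1) : ℂ) ^ 2 / ((m : ℂ) + 1) ^ s =
      64 * ((jacobiSigma (m + 1) : ℂ) * jacobiSigma (m + 1) / ((m : ℂ) + 1) ^ s) := by
    rw [rk_four_eq m.succ_ne_zero]
    push_cast
    ring
  have hsum := (hasSum_LSeries_succ (LSeriesSummable_jacobiSigma_mul_jacobiSigma hs)).mul_left 64
  simp only [← hterm] at hsum
  refine ⟨hsum.summable.norm, ?_⟩
  have hzeta : riemannZeta (2 * s - 2) ≠ 0 :=
    riemannZeta_ne_zero_of_one_le_re (by simpa using by linarith)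
  have htwo : (2 : ℂ) ^ (1 - s) = 2 * 2 ^ (-s) := by
    simpa using cpow_natCast_sub_natCast_mul two_ne_zero 1 1 s
  rw [hsum.tsum_eq, two_cpow_combination_eq, htwo, eq_div_iff
    (mul_ne_zero (one_add_two_mul_two_cpow_neg_ne_zero (by linarith)) hzeta)]
  linear_combination LSeries_jacobiSigma_mul_jacobiSigma hs
end
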